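/- arXiv:2004.14947 — 5 statements merged into one kernel-verified Lean document; each statement's English description precedes it below -/
import Mathlib

section
/- Let v, w be integers with 1 ≤ v < w and gcd(v, w) = 1. If v ≢ w (mod 2), then gcd(p₈(v,w), p₁₂(v,w)) = 1. If v and w are both odd, then 16 ∣ p₈(v,w), 64 ∣ p₁₂(v,w), and gcd(p₈(v,w)/16, p₁₂(v,w)/64) = 1. -/
/-- p₈(v,w) = v⁸ + 14v⁴w⁴ + w⁸. -/
def p8 (v w : ℤ) : ℤ := v ^ 8 + 14 * v ^ 4 * w ^ 4 + w ^ 8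

/-- p₁₂(v,w) = v¹² − 33v⁸w⁴ − 33v⁴w⁸ + w¹². -/
def p12 (v w : ℤ) : ℤ := v ^ 12 - 33 * v ^ 8 * w ^ 4 - 33 * v ^ 4 * w ^ 8 + w ^ 12

/-!
Modulo `p8 v w` the square of `p12 v w` is `-2 ^ 10 * 3 ^ 3 * (v * w) ^ 12`. Since `p8 v w` is
coprime to `3 * v * w` when `v` and `w` are coprime, every odd divisor of `p8 v w` is coprime to
`p12 v w`. It remains that `p8 v w` is odd when `v + w` is, and is `16` times an odd number when `v`
and `w` are both odd.
-/

variable {v w : ℤ}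

theorem p8_eq_add_sq_add (v w : ℤ) : p8 v w = (v ^ 4 + w ^ 4) ^ 2 + 12 * (v * w) ^ 4 := by
  unfold p8; ring

theorem p8_eq_sub_sq_add (v w : ℤ) : p8 v w = (v ^ 4 - w ^ 4) ^ 2 + 16 * (v * w) ^ 4 := by
  unfold p8; ring

theorem p12_eq_mul (v w : ℤ) :
    p12 v w = (v ^ 4 + w ^ 4) * ((v ^ 4 - w ^ 4) ^ 2 - 32 * (v * w) ^ 4) := by
  unfold p12; ring

-- With `s = v ^ 4 + w ^ 4` and `t = (v * w) ^ 4` one has `p8 v w = s ^ 2 + 12 * t` and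
-- `p12 v w = s * (p8 v w - 48 * t)`; eliminating `s` gives the identity.
theorem p12_sq_eq (v w : ℤ) :
    p12 v w ^ 2 =
      p8 v w * (p8 v w ^ 2 - 108 * (v * w) ^ 4 * p8 v w + 3456 * (v * w) ^ 8) -
        2 ^ 10 * 3 ^ 3 * (v * w) ^ 12 := by
  unfold p8 p12; ring

theorem not_three_dvd_pow_four_add_pow_four (h : IsCoprime v w) : ¬3 ∣ v ^ 4 + w ^ 4 := by
  intro hdvd
  have eq_zero_of_add_eq_zero : ∀ x y : ZMod 3, x ^ 4 + y ^ 4 = 0 → x = 0 ∧ y = 0 := by decide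
  have hsum : (v : ZMod 3) ^ 4 + (w : ZMod 3) ^ 4 = 0 := by
    exact_mod_cast (ZMod.intCast_zmod_eq_zero_iff_dvd (v ^ 4 + w ^ 4) 3).mpr hdvd
  obtain ⟨hv, hw⟩ := eq_zero_of_add_eq_zero _ _ hsum
  have h3v : 3 ∣ v := (ZMod.intCast_zmod_eq_zero_iff_dvd v 3).mp hv
  have h3w : 3 ∣ w := (ZMod.intCast_zmod_eq_zero_iff_dvd w 3).mp hw
  exact Int.prime_three.not_isUnit (h.isUnit_of_dvd' h3v h3w)

theorem isCoprime_p8_three (h : IsCoprime v w) : IsCoprime (p8 v w) 3 := by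
  have hsum : IsCoprime (v ^ 4 + w ^ 4) 3 :=
    (Int.prime_three.coprime_iff_not_dvd.mpr (not_three_dvd_pow_four_add_pow_four h)).symm
  have hp8 : p8 v w = (v ^ 4 + w ^ 4) ^ 2 + 3 * (4 * (v * w) ^ 4) := by
    rw [p8_eq_add_sq_add]; ring
  exact hp8 ▸ hsum.pow_left.add_mul_left_left _

theorem isCoprime_p8_mul (h : IsCoprime v w) : IsCoprime (p8 v w) (v * w) := by
  have hp8_left : p8 v w = w ^ 8 + v * (v ^ 7 + 14 * v ^ 3 * w ^ 4) := by unfold p8; ring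
  have hp8_right : p8 v w = v ^ 8 + w * (w ^ 7 + 14 * v ^ 4 * w ^ 3) := by unfold p8; ring
  exact .mul_right (hp8_left ▸ h.symm.pow_left.add_mul_left_left _)
    (hp8_right ▸ h.pow_left.add_mul_left_left _)

theorem isCoprime_p12_of_odd_of_dvd_p8 {x : ℤ} (h : IsCoprime v w) (hodd : Odd x)
    (hx : x ∣ p8 v w) : IsCoprime x (p12 v w) := by
  have h2 : IsCoprime x 2 := Int.isCoprime_two_right.mpr hodd
  have h3 : IsCoprime x 3 := (isCoprime_p8_three h).of_isCoprime_of_dvd_left hx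
  have hvw : IsCoprime x (v * w) := (isCoprime_p8_mul h).of_isCoprime_of_dvd_left hx
  have hconst : IsCoprime x (2 ^ 10 * 3 ^ 3 * (v * w) ^ 12) :=
    (h2.pow_right.mul_right h3.pow_right).mul_right hvw.pow_right
  have hsq : IsCoprime x (p12 v w ^ 2) := by
    obtain ⟨c, hc⟩ := hx
    rw [p12_sq_eq, hc, mul_assoc, IsCoprime.mul_sub_left_right_iff]
    exact hconst
  exact (IsCoprime.pow_right_iff two_pos).mp hsq

theorem odd_p8 (h : Odd (v + w)) : Odd (p8 v w) := by
  have hp8 : p8 v w = (v ^ 4 + w ^ 4) ^ 2 + 2 * (6 * (v * w) ^ 4) := by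
    rw [p8_eq_add_sq_add]; ring
  have hsum : Odd (v ^ 4 + w ^ 4) := by simpa [Int.odd_add, parity_simps] using h
  exact hp8 ▸ hsum.pow.add_even (even_two_mul _)

theorem sixteen_dvd_pow_four_sub_pow_four (hv : Odd v) (hw : Odd w) : 16 ∣ v ^ 4 - w ^ 4 := by
  have hsub : 8 ∣ v ^ 2 - w ^ 2 := by
    simpa using (Int.eight_dvd_sq_sub_one_of_odd hv).sub (Int.eight_dvd_sq_sub_one_of_odd hw)
  have hadd : 2 ∣ v ^ 2 + w ^ 2 := (hv.pow.add_odd hw.pow).two_dvd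
  have hfactor : v ^ 4 - w ^ 4 = (v ^ 2 - w ^ 2) * (v ^ 2 + w ^ 2) := by ring
  exact hfactor ▸ mul_dvd_mul hsub hadd

theorem exists_odd_p8_eq_sixteen_mul (hv : Odd v) (hw : Odd w) :
    ∃ m, Odd m ∧ p8 v w = 16 * m := by
  obtain ⟨c, hc⟩ := sixteen_dvd_pow_four_sub_pow_four hv hw
  refine ⟨2 * (8 * c ^ 2) + (v * w) ^ 4, (even_two_mul _).add_odd (hv.mul hw).pow, ?_⟩
  rw [p8_eq_sub_sq_add, hc]
  ring

theorem sixtyFour_dvd_p12 (hv : Odd v) (hw : Odd w) : 64 ∣ p12 v w := by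
  have hadd : 2 ∣ v ^ 4 + w ^ 4 := (hv.pow.add_odd hw.pow).two_dvd
  have hsq : 32 ∣ (v ^ 4 - w ^ 4) ^ 2 :=
    .trans (by norm_num) (pow_dvd_pow_of_dvd (sixteen_dvd_pow_four_sub_pow_four hv hw) 2)
  exact p12_eq_mul v w ▸ mul_dvd_mul hadd (hsq.sub (dvd_mul_right 32 _))

theorem stmt8_general (v w : ℤ) (hgcd : Int.gcd v w = 1) :
    (v % 2 ≠ w % 2 → Int.gcd (p8 v w) (p12 v w) = 1) ∧
    (Odd v → Odd w →
      16 ∣ p8 v w ∧ 64 ∣ p12 v w ∧ Int.gcd (p8 v w / 16) (p12 v w / 64) = 1) := by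
  have hcop : IsCoprime v w := Int.isCoprime_iff_gcd_eq_one.mpr hgcd
  simp only [← Int.isCoprime_iff_gcd_eq_one]
  refine ⟨fun hne => ?_, fun hv hw => ?_⟩
  · have hodd : Odd (v + w) := by rw [Int.odd_iff]; omega
    exact isCoprime_p12_of_odd_of_dvd_p8 hcop (odd_p8 hodd) dvd_rfl
  · obtain ⟨m, hm, hp8⟩ := exists_odd_p8_eq_sixteen_mul hv hw
    have h64 : 64 ∣ p12 v w := sixtyFour_dvd_p12 hv hw
    have hcop_m : IsCoprime m (p12 v w) :=
      isCoprime_p12_of_odd_of_dvd_p8 hcop hm (Dvd.intro_left 16 hp8.symm)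
    refine ⟨Dvd.intro m hp8.symm, h64, ?_⟩
    rw [hp8, Int.mul_ediv_cancel_left m (by norm_num)]
    exact hcop_m.of_isCoprime_of_dvd_right (Int.ediv_dvd_of_dvd h64)

theorem stmt8 (v w : ℤ) (h1 : 1 ≤ v) (hvw : v < w) (hgcd : Int.gcd v w = 1) :
    (v % 2 ≠ w % 2 → Int.gcd (p8 v w) (p12 v w) = 1) ∧
    (Odd v → Odd w →
      16 ∣ p8 v w ∧ 64 ∣ p12 v w ∧ Int.gcd (p8 v w / 16) (p12 v w / 64) = 1) :=
  stmt8_general v w hgcd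
end

section
/- There is a constant C > 0 such that for all real y ≥ 1 and all (i, j) ∈ {0,1}² with (i, j) ≠ (0, 0): |Σ 1/√p₈(v,w) − (α₃ + α₄)/(8y^{1/4})| ≤ C·y^{−3/8}, where the sum is over integer pairs (v, w) with 0 < v < w, p₈(v,w) > y, v ≡ i (mod 2) and w ≡ j (mod 2). -/
/-- p₈(v,w) = v⁸ + 14v⁴w⁴ + w⁸, as a real number, for integers v, w. -/
def p8R (v w : ℤ) : ℝ :=
  (v : ℝ) ^ 8 + 14 * (v : ℝ) ^ 4 * (w : ℝ) ^ 4 + (w : ℝ) ^ 8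

/-- p₈(u,1) = u⁸ + 14u⁴ + 1 for real u. -/
def p8u (u : ℝ) : ℝ := u ^ 8 + 14 * u ^ 4 + 1

/-!
In the coordinates `(x, k) = (v, w - v)` the sector `0 < v < w` is the first quadrant, where `p₈` is
increasing in each variable. The summand `1/√p₈`, cut off to `p₈ > y`, is not monotone there, but it
is the difference of `min (1/√y) (1/√p₈)` and `1/√y` on `p₈ ≤ y`, which are both antitone. For an
antitone function, `d²` times the sum over the points `(a + d m, b + d n)`, where `1 ≤ a, b ≤ d` and
`m, n ∈ ℕ`, differs from the integral over the quadrant by at most `d²` times the integral over the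
two boundary axes, and on an axis `min (1/√y) (1/k⁴)` integrates to `4/3 * y ^ (-3/8)`.

The integral of the summand over the quadrant is computed with `k = x s`: as `p₈` is homogeneous of
degree `8`, integrating first in `x` leaves `y ^ (-1/4) / 2` times the integral of
`p₈(1, 1 + s) ^ (-1/4)` over `s > 0`, which `u = (1 + s)⁻¹` turns into
`∫ u in 0..1, p₈(u, 1) ^ (-1/4)`. Finally `g t < u` is equivalent to `t < q u` with
`q u = p₈(u, 1) ^ (1/4)`, so exchanging the integrals in `α₄` gives
`∫ u in 0..1, (q u - 1) / q u ^ 2`, and adding `α₃ = ∫ u in 0..1, 1 / q u ^ 2` gives the same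
integral.
-/

open MeasureTheory Set
open scoped ENNReal

/-! ### Sums and integrals of antitone functions -/

lemma ofReal_mul_le_setLIntegral_Ioc {f : ℝ → ℝ≥0∞} {a b : ℝ} (hf : AntitoneOn f (Icc a b)) :
    ENNReal.ofReal (b - a) * f b ≤ ∫⁻ x in Ioc a b, f x := by
  rw [mul_comm, ← Real.volume_Ioc, ← setLIntegral_const]
  exact setLIntegral_mono' measurableSet_Ioc fun x hx =>
    hf (Ioc_subset_Icc_self hx) (right_mem_Icc.2 (hx.1.le.trans hx.2)) hx.2

lemma setLIntegral_Ioc_le_ofReal_mul {f : ℝ → ℝ≥0∞} {a b : ℝ} (hf : AntitoneOn f (Icc a b)) :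
    ∫⁻ x in Ioc a b, f x ≤ ENNReal.ofReal (b - a) * f a := by
  rw [mul_comm, ← Real.volume_Ioc, ← setLIntegral_const]
  exact setLIntegral_mono' measurableSet_Ioc fun x hx =>
    hf (left_mem_Icc.2 (hx.1.le.trans hx.2)) (Ioc_subset_Icc_self hx) hx.1.le

lemma setLIntegral_Ioi_eq_tsum_Ioc (f : ℝ → ℝ≥0∞) (a : ℝ) {d : ℝ} (hd : 0 < d) :
    ∫⁻ x in Ioi a, f x = ∑' n : ℕ, ∫⁻ x in Ioc (a + d * n) (a + d * (n + 1 : ℕ)), f x := by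
  have hmono : Monotone fun n : ℕ => a + d * n := fun m n hmn => by dsimp only; gcongr
  have hunbdd : ¬BddAbove (range fun n : ℕ => a + d * n) :=
    Filter.not_bddAbove_of_tendsto_atTop (Filter.tendsto_atTop_add_const_left _ a
      (tendsto_natCast_atTop_atTop.const_mul_atTop hd))
  have hunion : ⋃ n : ℕ, Ioc (a + d * n) (a + d * (n + 1 : ℕ)) = Ioi a := by
    simpa using iUnion_Ioc_map_succ_eq_Ioi (fun n => hmono (zero_le : 0 ≤ n)) hunbdd
  rw [← hunion]
  exact lintegral_iUnion (fun _ => measurableSet_Ioc) hmono.pairwise_disjoint_on_Ioc_succ f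

section Antitone

variable {f : ℝ → ℝ≥0∞} {a d : ℝ}

lemma ofReal_mul_tsum_succ_le_setLIntegral_Ioi (hf : AntitoneOn f (Ici a)) (hd : 0 < d) :
    ENNReal.ofReal d * ∑' n : ℕ, f (a + d * (n + 1 : ℕ)) ≤ ∫⁻ x in Ioi a, f x := by
  rw [setLIntegral_Ioi_eq_tsum_Ioc f a hd, ← ENNReal.tsum_mul_left]
  refine ENNReal.tsum_le_tsum fun n => ?_
  have hcell : Icc (a + d * n) (a + d * (n + 1 : ℕ)) ⊆ Ici a :=
    fun x hx => (le_add_of_nonneg_right (by positivity)).trans hx.1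
  convert ofReal_mul_le_setLIntegral_Ioc (hf.mono hcell) using 3
  push_cast; ring

lemma setLIntegral_Ioi_le_ofReal_mul_tsum (hf : AntitoneOn f (Ici a)) (hd : 0 < d) :
    ∫⁻ x in Ioi a, f x ≤ ENNReal.ofReal d * ∑' n : ℕ, f (a + d * n) := by
  rw [setLIntegral_Ioi_eq_tsum_Ioc f a hd, ← ENNReal.tsum_mul_left]
  refine ENNReal.tsum_le_tsum fun n => ?_
  have hcell : Icc (a + d * n) (a + d * (n + 1 : ℕ)) ⊆ Ici a :=
    fun x hx => (le_add_of_nonneg_right (by positivity)).trans hx.1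
  convert setLIntegral_Ioc_le_ofReal_mul (hf.mono hcell) using 3
  push_cast; ring

lemma setLIntegral_Ioi_zero_eq_add (f : ℝ → ℝ≥0∞) (ha : 0 ≤ a) :
    ∫⁻ x in Ioi 0, f x = (∫⁻ x in Ioc 0 a, f x) + ∫⁻ x in Ioi a, f x := by
  rw [← lintegral_union measurableSet_Ioi (Ioc_disjoint_Ioi le_rfl), Ioc_union_Ioi_eq_Ioi ha]

lemma tsum_le_setLIntegral_Ioi_zero (hf : AntitoneOn f (Ici 0)) (ha : 1 ≤ a) (hd : 1 ≤ d) :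
    ∑' n : ℕ, f (a + d * n) ≤ ∫⁻ x in Ioi 0, f x := by
  have ha₀ : 0 ≤ a := zero_le_one.trans ha
  have hhead : f a ≤ ∫⁻ x in Ioc 0 a, f x := by
    refine le_trans ?_ (ofReal_mul_le_setLIntegral_Ioc (hf.mono Icc_subset_Ici_self))
    exact le_mul_of_one_le_left' (by simpa using ha)
  have htail : ∑' n : ℕ, f (a + d * (n + 1 : ℕ)) ≤ ∫⁻ x in Ioi a, f x := by
    refine le_trans ?_ (ofReal_mul_tsum_succ_le_setLIntegral_Ioi
      (hf.mono (Ici_subset_Ici.2 ha₀)) (zero_lt_one.trans_le hd))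
    exact le_mul_of_one_le_left' (by simpa using hd)
  rw [tsum_eq_zero_add' ENNReal.summable, setLIntegral_Ioi_zero_eq_add f ha₀]
  simpa using add_le_add hhead htail

lemma ofReal_mul_tsum_le_add_setLIntegral_Ioi_zero (hf : AntitoneOn f (Ici 0)) (ha : 0 ≤ a)
    (hd : 0 < d) :
    ENNReal.ofReal d * ∑' n : ℕ, f (a + d * n)
      ≤ ENNReal.ofReal d * f 0 + ∫⁻ x in Ioi 0, f x := by
  rw [tsum_eq_zero_add' ENNReal.summable, mul_add]
  refine add_le_add ?_ ?_
  · have hhead : f (a + d * (0 : ℕ)) ≤ f 0 := by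
      simpa using hf self_mem_Ici ha ha
    gcongr
  · exact (ofReal_mul_tsum_succ_le_setLIntegral_Ioi (hf.mono (Ici_subset_Ici.2 ha)) hd).trans
      (lintegral_mono_set (Ioi_subset_Ioi ha))

lemma setLIntegral_Ioi_zero_le_add_ofReal_mul_tsum (hf : AntitoneOn f (Ici 0)) (ha : 0 ≤ a)
    (had : a ≤ d) (hd : 0 < d) :
    ∫⁻ x in Ioi 0, f x
      ≤ ENNReal.ofReal d * f 0 + ENNReal.ofReal d * ∑' n : ℕ, f (a + d * n) := by
  rw [setLIntegral_Ioi_zero_eq_add f ha]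
  refine add_le_add ?_ (setLIntegral_Ioi_le_ofReal_mul_tsum (hf.mono (Ici_subset_Ici.2 ha)) hd)
  calc ∫⁻ x in Ioc 0 a, f x ≤ ENNReal.ofReal (a - 0) * f 0 :=
        setLIntegral_Ioc_le_ofReal_mul (hf.mono Icc_subset_Ici_self)
    _ ≤ ENNReal.ofReal d * f 0 := by rw [sub_zero]; gcongr

end Antitone

/-- The sum of `Φ` over the lattice points `(a + d m, b + d n)` with `m, n ∈ ℕ`, a translate of
`d ℕ × d ℕ`. -/
noncomputable def latticeSum (Φ : ℝ × ℝ → ℝ≥0∞) (a b d : ℝ) : ℝ≥0∞ :=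
  ∑' m : ℕ, ∑' n : ℕ, Φ (a + d * m, b + d * n)

/-- The integral of `Φ` over the open first quadrant, as an iterated integral. -/
noncomputable def quadrantIntegral (Φ : ℝ × ℝ → ℝ≥0∞) : ℝ≥0∞ :=
  ∫⁻ x in Ioi 0, ∫⁻ k in Ioi 0, Φ (x, k)

/-- The integral of `Φ` over the two half-axes bounding the first quadrant; it measures the error
made in comparing a sum over lattice points of the quadrant with an integral. -/
noncomputable def axesIntegral (Φ : ℝ × ℝ → ℝ≥0∞) : ℝ≥0∞ :=
  (∫⁻ x in Ioi 0, Φ (x, 0)) + ∫⁻ k in Ioi 0, Φ (0, k)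

section Quadrant

variable {Φ : ℝ × ℝ → ℝ≥0∞} {a b d : ℝ}

lemma antitoneOn_prodMk_left (hΦ : AntitoneOn Φ (Ici 0)) {x : ℝ} (hx : 0 ≤ x) :
    AntitoneOn (fun k => Φ (x, k)) (Ici 0) := fun _ hk _ hl hkl =>
  hΦ ⟨hx, mem_Ici.1 hk⟩ ⟨hx, mem_Ici.1 hl⟩ ⟨le_rfl, hkl⟩

lemma antitoneOn_prodMk_right (hΦ : AntitoneOn Φ (Ici 0)) {k : ℝ} (hk : 0 ≤ k) :
    AntitoneOn (fun x => Φ (x, k)) (Ici 0) := fun _ hx _ hz hxz =>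
  hΦ ⟨mem_Ici.1 hx, hk⟩ ⟨mem_Ici.1 hz, hk⟩ ⟨hxz, le_rfl⟩

lemma antitoneOn_setLIntegral_prodMk (hΦ : AntitoneOn Φ (Ici 0)) :
    AntitoneOn (fun x => ∫⁻ k in Ioi 0, Φ (x, k)) (Ici 0) := fun _ hx _ hz hxz =>
  setLIntegral_mono' measurableSet_Ioi fun _ hk =>
    antitoneOn_prodMk_right hΦ (mem_Ioi.1 hk).le hx hz hxz

lemma ofReal_sq_mul_latticeSum_le (hΦ : AntitoneOn Φ (Ici 0)) (ha : 1 ≤ a) (hb : 0 ≤ b)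
    (hd : 1 ≤ d) :
    ENNReal.ofReal d ^ 2 * latticeSum Φ a b d
      ≤ quadrantIntegral Φ + ENNReal.ofReal d ^ 2 * axesIntegral Φ := by
  have hd₀ : 0 < d := zero_lt_one.trans_le hd
  have hD : 1 ≤ ENNReal.ofReal d := by simpa using hd
  set D := ENNReal.ofReal d
  calc D ^ 2 * latticeSum Φ a b d
      = D * ∑' m : ℕ, D * ∑' n : ℕ, Φ (a + d * m, b + d * n) := by
        rw [latticeSum, ENNReal.tsum_mul_left, sq, mul_assoc]
    _ ≤ D * ∑' m : ℕ, (D * Φ (a + d * m, 0) + ∫⁻ k in Ioi 0, Φ (a + d * m, k)) := by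
        gcongr with m
        exact ofReal_mul_tsum_le_add_setLIntegral_Ioi_zero
          (antitoneOn_prodMk_left hΦ (by positivity)) hb hd₀
    _ = D ^ 2 * ∑' m : ℕ, Φ (a + d * m, 0)
          + D * ∑' m : ℕ, ∫⁻ k in Ioi 0, Φ (a + d * m, k) := by
        rw [ENNReal.tsum_add, ENNReal.tsum_mul_left, mul_add, sq, mul_assoc]
    _ ≤ D ^ 2 * (∫⁻ x in Ioi 0, Φ (x, 0))
          + (D * (∫⁻ k in Ioi 0, Φ (0, k)) + quadrantIntegral Φ) := by
        gcongr
        · exact tsum_le_setLIntegral_Ioi_zero (antitoneOn_prodMk_right hΦ le_rfl) ha hd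
        · exact ofReal_mul_tsum_le_add_setLIntegral_Ioi_zero
            (antitoneOn_setLIntegral_prodMk hΦ) (by positivity) hd₀
    _ ≤ D ^ 2 * (∫⁻ x in Ioi 0, Φ (x, 0))
          + (D ^ 2 * (∫⁻ k in Ioi 0, Φ (0, k)) + quadrantIntegral Φ) := by
        gcongr
        exact le_self_pow₀ hD two_ne_zero
    _ = quadrantIntegral Φ + D ^ 2 * axesIntegral Φ := by rw [axesIntegral]; ring

lemma quadrantIntegral_le (hΦ : AntitoneOn Φ (Ici 0)) (ha : 1 ≤ a) (had : a ≤ d) (hb : 0 ≤ b)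
    (hbd : b ≤ d) :
    quadrantIntegral Φ
      ≤ ENNReal.ofReal d ^ 2 * latticeSum Φ a b d + ENNReal.ofReal d ^ 2 * axesIntegral Φ := by
  have hd : 1 ≤ d := ha.trans had
  have hd₀ : 0 < d := zero_lt_one.trans_le hd
  have hD : 1 ≤ ENNReal.ofReal d := by simpa using hd
  set D := ENNReal.ofReal d
  calc quadrantIntegral Φ
      ≤ D * (∫⁻ k in Ioi 0, Φ (0, k)) + D * ∑' m : ℕ, ∫⁻ k in Ioi 0, Φ (a + d * m, k) :=
        setLIntegral_Ioi_zero_le_add_ofReal_mul_tsum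
          (antitoneOn_setLIntegral_prodMk hΦ) (by positivity) had hd₀
    _ ≤ D * (∫⁻ k in Ioi 0, Φ (0, k)) + D * ∑' m : ℕ,
          (D * Φ (a + d * m, 0) + D * ∑' n : ℕ, Φ (a + d * m, b + d * n)) := by
        gcongr with m
        exact setLIntegral_Ioi_zero_le_add_ofReal_mul_tsum
          (antitoneOn_prodMk_left hΦ (by positivity)) hb hbd hd₀
    _ = D * (∫⁻ k in Ioi 0, Φ (0, k))
          + (D ^ 2 * ∑' m : ℕ, Φ (a + d * m, 0) + D ^ 2 * latticeSum Φ a b d) := by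
        rw [ENNReal.tsum_add, ENNReal.tsum_mul_left, ENNReal.tsum_mul_left, latticeSum]; ring
    _ ≤ D ^ 2 * (∫⁻ k in Ioi 0, Φ (0, k))
          + (D ^ 2 * (∫⁻ x in Ioi 0, Φ (x, 0)) + D ^ 2 * latticeSum Φ a b d) := by
        gcongr
        · exact le_self_pow₀ hD two_ne_zero
        · exact tsum_le_setLIntegral_Ioi_zero (antitoneOn_prodMk_right hΦ le_rfl) ha hd
    _ = D ^ 2 * latticeSum Φ a b d + D ^ 2 * axesIntegral Φ := by rw [axesIntegral]; ring

end Quadrant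

lemma le_add_two_mul_of_add_le_add {s s' j j' e : ℝ≥0∞} (hs' : s' ≠ ⊤)
    (h : s + s' ≤ j + j' + e) (h' : j' ≤ s' + e) : s ≤ j + 2 * e := by
  refine ENNReal.le_of_add_le_add_right hs' ?_
  calc s + s' ≤ j + j' + e := h
    _ ≤ j + (s' + e) + e := by gcongr
    _ = j + 2 * e + s' := by ring

lemma abs_toReal_sub_toReal_le {s j e : ℝ≥0∞} (hj : j ≠ ⊤) (he : e ≠ ⊤) (hsj : s ≤ j + e)
    (hjs : j ≤ s + e) : |s.toReal - j.toReal| ≤ e.toReal := by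
  have hs : s ≠ ⊤ := ne_top_of_le_ne_top (ENNReal.add_ne_top.2 ⟨hj, he⟩) hsj
  have hle := ENNReal.toReal_mono (ENNReal.add_ne_top.2 ⟨hj, he⟩) hsj
  have hge := ENNReal.toReal_mono (ENNReal.add_ne_top.2 ⟨hs, he⟩) hjs
  rw [ENNReal.toReal_add hj he] at hle
  rw [ENNReal.toReal_add hs he] at hge
  rw [abs_le]
  constructor <;> linarith

section Difference

variable {Φ Θ : ℝ × ℝ → ℝ≥0∞} {a b d : ℝ}

lemma latticeSum_add : latticeSum (Φ + Θ) a b d = latticeSum Φ a b d + latticeSum Θ a b d := by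
  simp only [latticeSum, Pi.add_apply, ENNReal.tsum_add]

lemma quadrantIntegral_add (hΦ : Measurable Φ) :
    quadrantIntegral (Φ + Θ) = quadrantIntegral Φ + quadrantIntegral Θ := by
  have hinner : Measurable fun x => ∫⁻ k in Ioi 0, Φ (x, k) := hΦ.lintegral_prod_right'
  rw [quadrantIntegral, quadrantIntegral, quadrantIntegral, ← lintegral_add_left hinner]
  refine lintegral_congr fun x => ?_
  exact lintegral_add_left (hΦ.comp measurable_prodMk_left) _

lemma axesIntegral_mono (h : Φ ≤ Θ) : axesIntegral Φ ≤ axesIntegral Θ :=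
  add_le_add (lintegral_mono fun _ => h _) (lintegral_mono fun _ => h _)

theorem abs_latticeSum_sub_quadrantIntegral_div_le (hΦ : Measurable Φ)
    (hΦΘ : AntitoneOn (Φ + Θ) (Ici 0)) (hΘ : AntitoneOn Θ (Ici 0))
    (hΦ_int : quadrantIntegral Φ ≠ ⊤) (hΘ_int : quadrantIntegral Θ ≠ ⊤)
    (haxes : axesIntegral (Φ + Θ) ≠ ⊤) (ha : 1 ≤ a) (had : a ≤ d) (hb : 0 ≤ b) (hbd : b ≤ d) :
    |(latticeSum Φ a b d).toReal - (quadrantIntegral Φ).toReal / d ^ 2|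
      ≤ 2 * (axesIntegral (Φ + Θ)).toReal := by
  have hd : 1 ≤ d := ha.trans had
  have hd₀ : 0 < d := zero_lt_one.trans_le hd
  have hdR : (ENNReal.ofReal d).toReal = d := ENNReal.toReal_ofReal hd₀.le
  have hD : ENNReal.ofReal d ≠ ⊤ := ENNReal.ofReal_ne_top
  have hΦΘ_sum := ofReal_sq_mul_latticeSum_le hΦΘ ha hb hd
  have hΦΘ_int := quadrantIntegral_le hΦΘ ha had hb hbd
  have hΘ_sum := ofReal_sq_mul_latticeSum_le hΘ ha hb hd
  have hΘ_int' := quadrantIntegral_le hΘ ha had hb hbd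
  set D := ENNReal.ofReal d
  set E := D ^ 2 * axesIntegral (Φ + Θ) with hE
  have hE_top : E ≠ ⊤ := by finiteness
  have hΘE : D ^ 2 * axesIntegral Θ ≤ E := by
    exact mul_le_mul_right (axesIntegral_mono le_add_self) _
  rw [latticeSum_add, quadrantIntegral_add hΦ, mul_add] at hΦΘ_sum hΦΘ_int
  replace hΘ_sum := hΘ_sum.trans (add_le_add_right hΘE _)
  replace hΘ_int' := hΘ_int'.trans (add_le_add_right hΘE _)
  have hΘ_sum_top : D ^ 2 * latticeSum Θ a b d ≠ ⊤ :=
    ne_top_of_le_ne_top (ENNReal.add_ne_top.2 ⟨hΘ_int, hE_top⟩) hΘ_sum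
  have key : |(D ^ 2 * latticeSum Φ a b d).toReal - (quadrantIntegral Φ).toReal|
      ≤ (2 * E).toReal :=
    abs_toReal_sub_toReal_le hΦ_int (by finiteness)
      (le_add_two_mul_of_add_le_add hΘ_sum_top hΦΘ_sum hΘ_int')
      (le_add_two_mul_of_add_le_add hΘ_int hΦΘ_int hΘ_sum)
  simp only [hE, ENNReal.toReal_mul, ENNReal.toReal_pow, ENNReal.toReal_ofNat, hdR] at key
  refine le_of_mul_le_mul_left ?_ (pow_pos hd₀ 2)
  rw [← abs_of_pos (pow_pos hd₀ 2), ← abs_mul, abs_of_pos (pow_pos hd₀ 2), mul_sub,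
    mul_div_cancel₀ _ (pow_pos hd₀ 2).ne']
  linarith

end Difference

/-! ### The octic form and its weights -/

/-- The octic form `p₈(v, w)` of the theorem in the coordinates `(x, k) = (v, w - v)`, which turn
the sector `0 < v < w` into the open first quadrant. -/
def shearedOctic (p : ℝ × ℝ) : ℝ :=
  p.1 ^ 8 + 14 * p.1 ^ 4 * (p.1 + p.2) ^ 4 + (p.1 + p.2) ^ 8

lemma monotoneOn_shearedOctic : MonotoneOn shearedOctic (Ici 0) := by
  rintro ⟨x, k⟩ ⟨hx, hk⟩ ⟨x', k'⟩ - ⟨hxx', hkk'⟩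
  dsimp only [Prod.fst_zero, Prod.snd_zero] at hx hk hxx' hkk'
  unfold shearedOctic
  gcongr

lemma fst_pow_le_shearedOctic (x k : ℝ) : x ^ 8 ≤ shearedOctic (x, k) := by
  unfold shearedOctic
  linarith [show 0 ≤ 14 * x ^ 4 * (x + k) ^ 4 + (x + k) ^ 8 by positivity]

lemma snd_pow_le_shearedOctic {x k : ℝ} (hx : 0 ≤ x) (hk : 0 ≤ k) :
    k ^ 8 ≤ shearedOctic (x, k) := by
  have : k ^ 8 ≤ (x + k) ^ 8 := by gcongr; linarith
  unfold shearedOctic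
  linarith [show 0 ≤ x ^ 8 + 14 * x ^ 4 * (x + k) ^ 4 by positivity]

lemma measurable_shearedOctic : Measurable shearedOctic := by
  unfold shearedOctic; fun_prop

lemma shearedOctic_mul (x s : ℝ) : shearedOctic (x, x * s) = x ^ 8 * p8u (1 + s) := by
  unfold shearedOctic p8u; ring

/-- The summand `1/√z` cut off to `z > y`. It is not monotone in `z`, but it is the difference of
the antitone functions `cappedWeight y` and `plateauWeight y`. -/
noncomputable def tailWeight (y : ℝ) : ℝ → ℝ≥0∞ :=
  (Ioi y).indicator fun z => ENNReal.ofReal (√z)⁻¹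

/-- The function equal to `1/√y` on `z ≤ y` and to `0` beyond, which fills the gap below `y` left by
the cut-off in `tailWeight y`. -/
noncomputable def plateauWeight (y : ℝ) : ℝ → ℝ≥0∞ :=
  (Iic y).indicator fun _ => ENNReal.ofReal (√y)⁻¹

/-- The function `min (1/√y) (1/√z)`, i.e. `1/√z` capped at its value at `y`. -/
noncomputable def cappedWeight (y z : ℝ) : ℝ≥0∞ := ENNReal.ofReal (√(max y z))⁻¹

section Weights

variable {y : ℝ}

lemma tailWeight_add_plateauWeight (y : ℝ) : tailWeight y + plateauWeight y = cappedWeight y := by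
  ext z
  rcases lt_or_ge y z with h | h
  · simp [tailWeight, plateauWeight, cappedWeight, h, h.le]
  · simp [tailWeight, plateauWeight, cappedWeight, h]

lemma antitone_plateauWeight (y : ℝ) : Antitone (plateauWeight y) := fun z z' hz => by
  by_cases h : z' ≤ y
  · simp [plateauWeight, h, hz.trans h]
  · simp [plateauWeight, h]

lemma antitone_cappedWeight (hy : 0 < y) : Antitone (cappedWeight y) := fun z z' hz => by
  unfold cappedWeight
  have : 0 < max y z := lt_max_of_lt_left hy
  gcongr

lemma plateauWeight_le_cappedWeight (y : ℝ) : plateauWeight y ≤ cappedWeight y :=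
  tailWeight_add_plateauWeight y ▸ le_add_self

lemma measurable_tailWeight (y : ℝ) : Measurable (tailWeight y) :=
  (by fun_prop : Measurable fun z : ℝ => ENNReal.ofReal (√z)⁻¹).indicator measurableSet_Ioi

lemma tailWeight_comp_add_plateauWeight_comp (y : ℝ) :
    tailWeight y ∘ shearedOctic + plateauWeight y ∘ shearedOctic
      = cappedWeight y ∘ shearedOctic := by
  rw [← tailWeight_add_plateauWeight]; rfl

lemma rpow_one_div_eight_lt_iff {k : ℝ} (hy : 0 ≤ y) (hk : 0 ≤ k) :
    y ^ (1 / 8 : ℝ) < k ↔ y < k ^ 8 := by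
  rw [← pow_lt_pow_iff_left₀ (by positivity) hk (n := 8) (by norm_num), ← Real.rpow_natCast,
    ← Real.rpow_mul hy]
  norm_num

lemma lintegral_Ioi_ofReal_rpow {a c : ℝ} (ha : a < -1) (hc : 0 < c) :
    ∫⁻ x in Ioi c, ENNReal.ofReal (x ^ a) = ENNReal.ofReal (-c ^ (a + 1) / (a + 1)) := by
  rw [← integral_Ioi_rpow_of_lt ha hc, ofReal_integral_eq_lintegral_ofReal
    (integrableOn_Ioi_rpow_of_lt ha hc)]
  filter_upwards [ae_restrict_mem measurableSet_Ioi] with x hx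
  exact Real.rpow_nonneg (hc.trans hx).le _

lemma cappedWeight_of_le {z : ℝ} (h : z ≤ y) : cappedWeight y z = ENNReal.ofReal (√y)⁻¹ := by
  rw [cappedWeight, max_eq_left h]

lemma cappedWeight_of_ge {z : ℝ} (h : y ≤ z) : cappedWeight y z = ENNReal.ofReal (√z)⁻¹ := by
  rw [cappedWeight, max_eq_right h]

lemma lintegral_cappedWeight_pow (hy : 0 < y) :
    ∫⁻ k in Ioi 0, cappedWeight y (k ^ 8) = ENNReal.ofReal (4 / 3 * y ^ (-3 / 8 : ℝ)) := by
  set Y := y ^ (1 / 8 : ℝ) with hY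
  have hY₀ : 0 < Y := by positivity
  have hhead : ∫⁻ k in Ioc 0 Y, cappedWeight y (k ^ 8) = ENNReal.ofReal (y ^ (-3 / 8 : ℝ)) := by
    have hconst : EqOn (fun k => cappedWeight y (k ^ 8)) (fun _ => ENNReal.ofReal (√y)⁻¹)
        (Ioc 0 Y) := fun k hk => cappedWeight_of_le <| not_lt.1 fun h =>
      hk.2.not_gt ((rpow_one_div_eight_lt_iff hy.le hk.1.le).2 h)
    rw [setLIntegral_congr_fun measurableSet_Ioc hconst, setLIntegral_const, Real.volume_Ioc,
      sub_zero, ← ENNReal.ofReal_mul (by positivity), Real.sqrt_eq_rpow, ← Real.rpow_neg hy.le,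
      hY, ← Real.rpow_add hy]
    norm_num
  have htail : ∫⁻ k in Ioi Y, cappedWeight y (k ^ 8)
      = ENNReal.ofReal (1 / 3 * y ^ (-3 / 8 : ℝ)) := by
    have hrpow : EqOn (fun k => cappedWeight y (k ^ 8)) (fun k => ENNReal.ofReal (k ^ (-4 : ℝ)))
        (Ioi Y) := fun k hk => by
      have hk₀ : 0 < k := hY₀.trans hk
      have : y < k ^ 8 := (rpow_one_div_eight_lt_iff hy.le hk₀.le).1 hk
      have hsqrt : √(k ^ 8) = k ^ (4 : ℝ) := by
        rw [show k ^ 8 = (k ^ 4) ^ 2 by ring, Real.sqrt_sq (by positivity)]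
        norm_cast
      simp only [cappedWeight_of_ge this.le, hsqrt, Real.rpow_neg hk₀.le]
    rw [setLIntegral_congr_fun measurableSet_Ioi hrpow, lintegral_Ioi_ofReal_rpow (by norm_num) hY₀,
      hY, ← Real.rpow_mul hy.le]
    congr 1
    norm_num
    ring
  rw [setLIntegral_Ioi_zero_eq_add _ hY₀.le, hhead, htail,
    ← ENNReal.ofReal_add (by positivity) (by positivity)]
  ring_nf

lemma axesIntegral_cappedWeight_le (hy : 0 < y) :
    axesIntegral (cappedWeight y ∘ shearedOctic) ≤ ENNReal.ofReal (8 / 3 * y ^ (-3 / 8 : ℝ)) := by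
  have hfst : ∫⁻ x in Ioi 0, cappedWeight y (shearedOctic (x, 0))
      ≤ ∫⁻ x in Ioi 0, cappedWeight y (x ^ 8) :=
    lintegral_mono fun x =>
      antitone_cappedWeight hy (fst_pow_le_shearedOctic x 0)
  have hsnd : ∫⁻ k in Ioi 0, cappedWeight y (shearedOctic (0, k))
      ≤ ∫⁻ k in Ioi 0, cappedWeight y (k ^ 8) :=
    setLIntegral_mono' measurableSet_Ioi fun k hk =>
      antitone_cappedWeight hy (snd_pow_le_shearedOctic le_rfl (mem_Ioi.1 hk).le)
  refine (add_le_add hfst hsnd).trans_eq ?_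
  rw [lintegral_cappedWeight_pow hy, ← ENNReal.ofReal_add (by positivity) (by positivity)]
  ring_nf

lemma quadrantIntegral_plateauWeight_ne_top (hy : 0 < y) :
    quadrantIntegral (plateauWeight y ∘ shearedOctic) ≠ ⊤ := by
  set Y := y ^ (1 / 8 : ℝ)
  have hhead : ∫⁻ x in Ioc 0 Y, ∫⁻ k in Ioi 0, plateauWeight y (shearedOctic (x, k))
      ≤ ∫⁻ _ in Ioc 0 Y, ∫⁻ k in Ioi 0, cappedWeight y (k ^ 8) :=
    setLIntegral_mono' measurableSet_Ioc fun x hx =>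
      setLIntegral_mono' measurableSet_Ioi fun k hk =>
        (plateauWeight_le_cappedWeight y _).trans
          (antitone_cappedWeight hy (snd_pow_le_shearedOctic hx.1.le (mem_Ioi.1 hk).le))
  have htail : ∫⁻ x in Ioi Y, ∫⁻ k in Ioi 0, plateauWeight y (shearedOctic (x, k)) = 0 := by
    refine setLIntegral_eq_zero measurableSet_Ioi fun x hx =>
      setLIntegral_eq_zero measurableSet_Ioi fun k _ => ?_
    have hx₀ : 0 ≤ x := (by positivity : 0 ≤ Y).trans (mem_Ioi.1 hx).le
    have hlt : y < shearedOctic (x, k) :=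
      ((rpow_one_div_eight_lt_iff hy.le hx₀).1 hx).trans_le
        (fst_pow_le_shearedOctic x k)
    exact indicator_of_notMem (notMem_Iic.2 hlt) _
  refine ne_top_of_le_ne_top ?_ ((setLIntegral_Ioi_zero_eq_add _ (by positivity)).trans_le
    (add_le_add hhead htail.le))
  rw [setLIntegral_const, lintegral_cappedWeight_pow hy, Real.volume_Ioc]
  finiteness

end Weights

/-! ### The integral over the sector -/

lemma setLIntegral_Ioi_zero_eq_comp_mul_left (f : ℝ → ℝ≥0∞) {x : ℝ} (hx : 0 < x) :
    ∫⁻ k in Ioi 0, f k = ∫⁻ s in Ioi 0, ENNReal.ofReal x * f (x * s) := by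
  have himage : (fun s => x * s) '' Ioi (0 : ℝ) = Ioi 0 := by
    rw [image_mul_left_Ioi hx, mul_zero]
  conv_lhs => rw [← himage]
  rw [lintegral_image_eq_lintegral_abs_deriv_mul measurableSet_Ioi
    (fun s _ => (hasDerivAt_const_mul x).hasDerivWithinAt)
    (mul_right_injective₀ hx.ne').injOn, abs_of_pos hx]

lemma setLIntegral_Ioi_zero_comp_one_add (f : ℝ → ℝ≥0∞) :
    ∫⁻ s in Ioi 0, f (1 + s) = ∫⁻ u in Ioo 0 1, ENNReal.ofReal (u ^ 2)⁻¹ * f u⁻¹ := by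
  have himage : (fun u : ℝ => u⁻¹ - 1) '' Ioo 0 1 = Ioi 0 := by
    ext s
    refine ⟨?_, fun hs => ⟨(1 + s)⁻¹, ?_, by simp⟩⟩
    · rintro ⟨u, ⟨hu₀, hu₁⟩, rfl⟩
      exact sub_pos.2 ((one_lt_inv₀ hu₀).2 hu₁)
    · have hs : 1 < 1 + s := lt_add_of_pos_right 1 hs
      exact ⟨inv_pos.2 (zero_lt_one.trans hs), inv_lt_one_of_one_lt₀ hs⟩
  rw [← himage, lintegral_image_eq_lintegral_abs_deriv_mul measurableSet_Ioo
    (fun u hu => ((hasDerivAt_inv hu.1.ne').sub_const 1).hasDerivWithinAt)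
    fun u _ v _ h => by simpa using h]
  simp [abs_neg, abs_of_nonneg, sq_nonneg]

lemma one_le_p8u (u : ℝ) : 1 ≤ p8u u :=
  le_add_of_nonneg_left (by positivity)

lemma p8u_pos (u : ℝ) : 0 < p8u u := zero_lt_one.trans_le (one_le_p8u u)

lemma continuous_p8u : Continuous p8u := by unfold p8u; fun_prop

lemma continuous_p8u_rpow (r : ℝ) : Continuous fun u => p8u u ^ r :=
  continuous_p8u.rpow_const fun u => .inl (p8u_pos u).ne'

lemma p8u_inv_rpow {u : ℝ} (hu : 0 < u) :
    p8u u⁻¹ ^ (-1 / 4 : ℝ) = u ^ 2 * p8u u ^ (-1 / 4 : ℝ) := by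
  have hhom : p8u u⁻¹ = u ^ (-8 : ℝ) * p8u u := by
    rw [Real.rpow_neg hu.le]
    norm_cast
    unfold p8u
    field_simp
    ring
  rw [hhom, Real.mul_rpow (by positivity) (p8u_pos u).le, ← Real.rpow_mul hu.le]
  norm_num

lemma setLIntegral_Ioi_zero_p8u_rpow :
    ∫⁻ s in Ioi 0, ENNReal.ofReal (p8u (1 + s) ^ (-1 / 4 : ℝ))
      = ENNReal.ofReal (∫ u in 0..1, p8u u ^ (-1 / 4 : ℝ)) := by
  rw [setLIntegral_Ioi_zero_comp_one_add fun u => ENNReal.ofReal (p8u u ^ (-1 / 4 : ℝ)),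
    intervalIntegral.integral_of_le zero_le_one, ofReal_integral_eq_lintegral_ofReal
      (continuous_p8u_rpow _).integrableOn_Ioc
      (.of_forall fun u => Real.rpow_nonneg (p8u_pos u).le _),
    ← restrict_Ioo_eq_restrict_Ioc]
  refine setLIntegral_congr_fun measurableSet_Ioo fun u hu => ?_
  have hu₂ : 0 < u ^ 2 := pow_pos hu.1 2
  rw [p8u_inv_rpow hu.1, ← ENNReal.ofReal_mul (by positivity), inv_mul_cancel_left₀ hu₂.ne']

lemma ofReal_mul_tailWeight_eq_indicator {x y Q : ℝ} (hx : 0 < x) (hy : 0 ≤ y) (hQ : 0 < Q) :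
    ENNReal.ofReal x * tailWeight y (x ^ 8 * Q) = (Ioi ((y / Q) ^ (1 / 8 : ℝ))).indicator
      (fun x => ENNReal.ofReal (√Q)⁻¹ * ENNReal.ofReal (x ^ (-3 : ℝ))) x := by
  have hiff : (y / Q) ^ (1 / 8 : ℝ) < x ↔ y < x ^ 8 * Q := by
    rw [rpow_one_div_eight_lt_iff (by positivity) hx.le, div_lt_iff₀ hQ]
  by_cases h : y < x ^ 8 * Q
  · have hsqrt : √(x ^ 8 * Q) = x ^ 4 * √Q := by
      rw [show x ^ 8 * Q = (x ^ 4) ^ 2 * Q by ring, Real.sqrt_mul (by positivity),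
        Real.sqrt_sq (by positivity)]
    rw [indicator_of_mem (mem_Ioi.2 (hiff.2 h)), tailWeight, indicator_of_mem (mem_Ioi.2 h), hsqrt,
      ← ENNReal.ofReal_mul hx.le, ← ENNReal.ofReal_mul (by positivity), Real.rpow_neg hx.le]
    congr 1
    norm_cast
    field_simp
  · rw [indicator_of_notMem (mt (hiff.1 ∘ mem_Ioi.1) h), tailWeight,
      indicator_of_notMem (mt mem_Ioi.1 h), mul_zero]

lemma setLIntegral_ofReal_mul_tailWeight {y Q : ℝ} (hy : 0 < y) (hQ : 0 < Q) :
    ∫⁻ x in Ioi 0, ENNReal.ofReal x * tailWeight y (x ^ 8 * Q)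
      = ENNReal.ofReal (y ^ (-1 / 4 : ℝ) / 2 * Q ^ (-1 / 4 : ℝ)) := by
  rw [setLIntegral_congr_fun measurableSet_Ioi
      fun x hx => ofReal_mul_tailWeight_eq_indicator hx hy.le hQ,
    setLIntegral_indicator measurableSet_Ioi, inter_eq_left.2 (Ioi_subset_Ioi (by positivity)),
    lintegral_const_mul' _ _ ENNReal.ofReal_ne_top,
    lintegral_Ioi_ofReal_rpow (by norm_num) (by positivity), ← ENNReal.ofReal_mul (by positivity),
    Real.sqrt_eq_rpow, ← Real.rpow_neg hQ.le, ← Real.rpow_mul (by positivity),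
    Real.div_rpow hy.le hQ.le, div_eq_mul_inv _ (Q ^ _), ← Real.rpow_neg hQ.le]
  have hsplit : Q ^ (-1 / 4 : ℝ) = Q ^ (-(1 / 2) : ℝ) * Q ^ (1 / 4 : ℝ) := by
    rw [← Real.rpow_add hQ]; norm_num
  rw [hsplit]
  norm_num
  ring_nf

lemma quadrantIntegral_tailWeight {y : ℝ} (hy : 0 < y) :
    quadrantIntegral (tailWeight y ∘ shearedOctic)
      = ENNReal.ofReal (y ^ (-1 / 4 : ℝ) / 2 * ∫ u in 0..1, p8u u ^ (-1 / 4 : ℝ)) := by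
  have hmeas : Measurable fun p : ℝ × ℝ =>
      ENNReal.ofReal p.1 * tailWeight y (p.1 ^ 8 * p8u (1 + p.2)) :=
    Measurable.mul (by fun_prop) <| (measurable_tailWeight y).comp <|
      (measurable_fst.pow_const 8).mul (continuous_p8u.measurable.comp (by fun_prop))
  calc quadrantIntegral (tailWeight y ∘ shearedOctic)
      = ∫⁻ x in Ioi 0, ∫⁻ s in Ioi 0,
          ENNReal.ofReal x * tailWeight y (x ^ 8 * p8u (1 + s)) :=
        setLIntegral_congr_fun measurableSet_Ioi fun x hx => by
          rw [setLIntegral_Ioi_zero_eq_comp_mul_left _ hx]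
          simp only [Function.comp_apply, shearedOctic_mul]
    _ = ∫⁻ s in Ioi 0, ∫⁻ x in Ioi 0,
          ENNReal.ofReal x * tailWeight y (x ^ 8 * p8u (1 + s)) :=
        lintegral_lintegral_swap hmeas.aemeasurable
    _ = ENNReal.ofReal (y ^ (-1 / 4 : ℝ) / 2) *
          ∫⁻ s in Ioi 0, ENNReal.ofReal (p8u (1 + s) ^ (-1 / 4 : ℝ)) := by
        rw [← lintegral_const_mul' _ _ ENNReal.ofReal_ne_top]
        simp only [setLIntegral_ofReal_mul_tailWeight hy (p8u_pos _),
          ENNReal.ofReal_mul (by positivity : 0 ≤ y ^ (-1 / 4 : ℝ) / 2)]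
    _ = _ := by
        rw [setLIntegral_Ioi_zero_p8u_rpow, ENNReal.ofReal_mul (by positivity)]

/-! ### The constants `α₃` and `α₄` -/

lemma integral_integral_eq_integral_sub_mul {a b c e : ℝ} {g q h : ℝ → ℝ} (hab : a ≤ b)
    (hce : c ≤ e) (hg : Measurable g) (hgc : ∀ t ∈ Ioc a b, g t ∈ Icc c e)
    (hq : ∀ u ∈ Ioc c e, q u ∈ Icc a b)
    (hgq : ∀ t ∈ Ioc a b, ∀ u ∈ Ioc c e, g t < u ↔ t < q u)
    (hh : IntervalIntegrable h volume c e) :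
    ∫ t in a..b, ∫ u in g t..e, h u = ∫ u in c..e, (q u - a) * h u := by
  set F : ℝ → ℝ → ℝ := fun t u => (Ioi (g t)).indicator h u with hF
  have hinner : ∀ t ∈ Ioc a b, ∫ u in g t..e, h u = ∫ u in Ioc c e, F t u := fun t ht => by
    obtain ⟨hct, hte⟩ := hgc t ht
    rw [intervalIntegral.integral_of_le hte, setIntegral_indicator measurableSet_Ioi,
      Ioc_inter_Ioi, max_eq_right hct]
  have hslice : ∀ u ∈ Ioc c e, ∫ t in Ioc a b, F t u = (q u - a) * h u := fun u hu => by
    obtain ⟨hau, hub⟩ := hq u hu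
    have hFu : EqOn (F · u) ((Iio (q u)).indicator fun _ => h u) (Ioc a b) := fun t ht => by
      simp only [hF, indicator, mem_Ioi, mem_Iio, hgq t ht u hu]
    have hset : Ioc a b ∩ Iio (q u) = Ioo a (q u) :=
      Set.ext fun t => ⟨fun ht => ⟨ht.1.1, ht.2⟩, fun ht => ⟨⟨ht.1, ht.2.le.trans hub⟩, ht.2⟩⟩
    rw [setIntegral_congr_fun measurableSet_Ioc hFu, setIntegral_indicator measurableSet_Iio, hset,
      setIntegral_const, Real.volume_real_Ioo_of_le hau, smul_eq_mul]
  have hint : Integrable (Function.uncurry F)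
      ((volume.restrict (Ioc a b)).prod (volume.restrict (Ioc c e))) :=
    (hh.1.comp_snd _).indicator (measurableSet_lt (hg.comp measurable_fst) measurable_snd)
  rw [intervalIntegral.integral_of_le hab, intervalIntegral.integral_of_le hce,
    setIntegral_congr_fun measurableSet_Ioc hinner, integral_integral_swap hint,
    setIntegral_congr_fun measurableSet_Ioc hslice]

lemma sqrt_sub_seven_mem_Icc {t : ℝ} (ht : t ∈ Icc 1 2) : √(t ^ 4 + 48) - 7 ∈ Icc 0 1 := by
  have hlower : 1 ≤ t ^ 4 := one_le_pow₀ ht.1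
  have hupper : t ^ 4 ≤ 2 ^ 4 := by gcongr; exacts [zero_le_one.trans ht.1, ht.2]
  have hseven_le : 7 ≤ √(t ^ 4 + 48) := Real.le_sqrt_of_sq_le (by linarith)
  have hle_eight : √(t ^ 4 + 48) ≤ 8 := Real.sqrt_le_iff.2 ⟨by norm_num, by linarith⟩
  constructor <;> linarith

lemma p8u_rpow_mem_Icc {u : ℝ} (hu : u ∈ Icc 0 1) : p8u u ^ (1 / 4 : ℝ) ∈ Icc 1 2 := by
  have hp8u : p8u u ≤ 2 ^ (4 : ℝ) := by
    have h8 : u ^ 8 ≤ 1 := pow_le_one₀ hu.1 hu.2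
    have h4 : u ^ 4 ≤ 1 := pow_le_one₀ hu.1 hu.2
    unfold p8u
    norm_num
    linarith
  refine ⟨Real.one_le_rpow (one_le_p8u u) (by norm_num), ?_⟩
  calc p8u u ^ (1 / 4 : ℝ) ≤ (2 ^ (4 : ℝ)) ^ (1 / 4 : ℝ) := by
        gcongr; exact (p8u_pos u).le
    _ = 2 := by rw [← Real.rpow_mul zero_le_two]; norm_num

lemma rpow_one_div_four_pow {z : ℝ} (hz : 0 ≤ z) : (z ^ (1 / 4 : ℝ)) ^ 4 = z := by
  rw [← Real.rpow_natCast, ← Real.rpow_mul hz]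
  norm_num

-- Both sides say `t ^ 4 + 48 < (u ^ 4 + 7) ^ 2`: the square `(u ^ 4 + 7) ^ 2` is `p8u u + 48`.
lemma rpow_sqrt_sub_seven_lt_iff {t u : ℝ} (ht : t ∈ Icc 1 2) (hu : 0 ≤ u) :
    (√(t ^ 4 + 48) - 7) ^ (1 / 4 : ℝ) < u ↔ t < p8u u ^ (1 / 4 : ℝ) := by
  have hs := (sqrt_sub_seven_mem_Icc ht).1
  have ht₀ : 0 ≤ t := zero_le_one.trans ht.1
  have hp := (p8u_pos u).le
  have hsq : (u ^ 4 + 7) ^ 2 = p8u u + 48 := by unfold p8u; ring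
  rw [← pow_lt_pow_iff_left₀ (by positivity) hu four_ne_zero, rpow_one_div_four_pow hs,
    ← pow_lt_pow_iff_left₀ ht₀ (by positivity) four_ne_zero, rpow_one_div_four_pow hp,
    sub_lt_iff_lt_add, Real.sqrt_lt' (by positivity), hsq, add_lt_add_iff_right]

lemma rpow_mul_one_div_sqrt {z : ℝ} (hz : 0 < z) :
    z ^ (1 / 4 : ℝ) * (1 / √z) = z ^ (-1 / 4 : ℝ) := by
  rw [Real.sqrt_eq_rpow, one_div (z ^ _), ← Real.rpow_neg hz.le, ← Real.rpow_add hz]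
  norm_num

theorem integral_one_div_sqrt_p8u_add {g : ℝ → ℝ}
    (hg : ∀ t, g t = (√(t ^ 4 + 48) - 7) ^ (1 / 4 : ℝ)) :
    (∫ u in 0..1, 1 / √(p8u u)) + ∫ t in 1..2, ∫ u in g t..1, 1 / √(p8u u)
      = ∫ u in 0..1, p8u u ^ (-1 / 4 : ℝ) := by
  have hcont : Continuous fun u => 1 / √(p8u u) :=
    continuous_const.div (by have := continuous_p8u; fun_prop) fun u =>
      (Real.sqrt_pos.2 (p8u_pos u)).ne'
  have hgmeas : Measurable g := by rw [funext hg]; fun_prop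
  have hgc : ∀ t ∈ Ioc 1 2, g t ∈ Icc 0 1 := fun t ht => by
    obtain ⟨hs₀, hs₁⟩ := sqrt_sub_seven_mem_Icc (Ioc_subset_Icc_self ht)
    rw [hg]
    exact ⟨Real.rpow_nonneg hs₀ _, Real.rpow_le_one hs₀ hs₁ (by norm_num)⟩
  have hgq : ∀ t ∈ Ioc 1 2, ∀ u ∈ Ioc 0 1, g t < u ↔ t < p8u u ^ (1 / 4 : ℝ) :=
    fun t ht u hu => by rw [hg, rpow_sqrt_sub_seven_lt_iff (Ioc_subset_Icc_self ht) hu.1.le]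
  have hint : IntervalIntegrable (fun u => (p8u u ^ (1 / 4 : ℝ) - 1) * (1 / √(p8u u))) volume 0 1 :=
    (((continuous_p8u_rpow _).sub continuous_const).mul hcont).intervalIntegrable _ _
  rw [integral_integral_eq_integral_sub_mul one_le_two zero_le_one hgmeas hgc
    (fun u hu => p8u_rpow_mem_Icc (Ioc_subset_Icc_self hu)) hgq (hcont.intervalIntegrable _ _),
    ← intervalIntegral.integral_add (hcont.intervalIntegrable _ _) hint]
  refine intervalIntegral.integral_congr fun u _ => ?_
  rw [← rpow_mul_one_div_sqrt (p8u_pos u)]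
  ring

theorem abs_latticeSum_tailWeight_sub_le {y a b d : ℝ} (hy : 0 < y) (ha : 1 ≤ a) (had : a ≤ d)
    (hb : 0 ≤ b) (hbd : b ≤ d) :
    |(latticeSum (tailWeight y ∘ shearedOctic) a b d).toReal
        - (∫ u in 0..1, p8u u ^ (-1 / 4 : ℝ)) / (2 * d ^ 2 * y ^ (1 / 4 : ℝ))|
      ≤ 16 / 3 * y ^ (-3 / 8 : ℝ) := by
  have hI : 0 ≤ ∫ u in 0..1, p8u u ^ (-1 / 4 : ℝ) :=
    intervalIntegral.integral_nonneg zero_le_one fun u _ => Real.rpow_nonneg (p8u_pos u).le _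
  have hmain := quadrantIntegral_tailWeight hy
  have haxes := axesIntegral_cappedWeight_le hy
  have hcapped : AntitoneOn (tailWeight y ∘ shearedOctic + plateauWeight y ∘ shearedOctic)
      (Ici 0) := by
    rw [tailWeight_comp_add_plateauWeight_comp]
    exact (antitone_cappedWeight hy).comp_monotoneOn monotoneOn_shearedOctic
  have hdiff := abs_latticeSum_sub_quadrantIntegral_div_le
    ((measurable_tailWeight y).comp measurable_shearedOctic) hcapped
    ((antitone_plateauWeight y).comp_monotoneOn monotoneOn_shearedOctic)
    (hmain ▸ ENNReal.ofReal_ne_top) (quadrantIntegral_plateauWeight_ne_top hy)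
    (by
      rw [tailWeight_comp_add_plateauWeight_comp]
      exact ne_top_of_le_ne_top ENNReal.ofReal_ne_top haxes) ha had hb hbd
  rw [tailWeight_comp_add_plateauWeight_comp, hmain, ENNReal.toReal_ofReal (by positivity)] at hdiff
  have hmain_real : (∫ u in 0..1, p8u u ^ (-1 / 4 : ℝ)) / (2 * d ^ 2 * y ^ (1 / 4 : ℝ))
      = y ^ (-1 / 4 : ℝ) / 2 * (∫ u in 0..1, p8u u ^ (-1 / 4 : ℝ)) / d ^ 2 := by
    rw [neg_div, Real.rpow_neg hy.le]
    ring
  rw [hmain_real]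
  linarith [ENNReal.toReal_le_of_le_ofReal (by positivity) haxes]

/-! ### Lattice points in residue classes -/

section Residues

variable {a b d : ℤ}

lemma exists_modEq_mem_Icc_one (hd : 0 < d) (i : ℤ) : ∃ a ∈ Icc 1 d, a ≡ i [ZMOD d] := by
  obtain ⟨z, hz₀, hzd, hz⟩ := Int.existsUnique_equiv (i - 1) hd
  exact ⟨z + 1, ⟨by lia, by lia⟩, by simpa using hz.add_right 1⟩

lemma exists_eq_add_mul_natCast {v : ℤ} (hd : 0 < d) (had : a ≤ d) (hv : 0 < v)
    (h : v ≡ a [ZMOD d]) : ∃ n : ℕ, v = a + d * n := by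
  obtain ⟨k, hk⟩ := h.symm.dvd
  have hk₀ : -1 < k := lt_of_mul_lt_mul_left (by linarith : d * -1 < d * k) hd.le
  lift k to ℕ using by lia
  exact ⟨k, by linarith⟩

/-- The parametrisation by `ℕ × ℕ` of the integer pairs `(v, w)` with `0 < v < w` and
`v ≡ a`, `w ≡ a + b` modulo `d`, for `1 ≤ a, b ≤ d`. -/
def sectorPoint (a b d : ℤ) (p : ℕ × ℕ) : ℤ × ℤ :=
  (a + d * p.1, a + d * p.1 + (b + d * p.2))

lemma sectorPoint_injective (hd : 0 < d) : Function.Injective (sectorPoint a b d) := by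
  rintro ⟨m, n⟩ ⟨m', n'⟩ h
  simp only [sectorPoint, Prod.mk.injEq] at h
  obtain ⟨hfst, hsnd⟩ := h
  have hm : (m : ℤ) = m' := mul_left_cancel₀ hd.ne' (add_left_cancel hfst)
  have hn : (n : ℤ) = n' := mul_left_cancel₀ hd.ne' (by linarith)
  exact Prod.ext (by exact_mod_cast hm) (by exact_mod_cast hn)

lemma range_sectorPoint (ha : a ∈ Icc 1 d) (hb : b ∈ Icc 1 d) :
    range (sectorPoint a b d)
      = {q | 0 < q.1 ∧ q.1 < q.2 ∧ q.1 ≡ a [ZMOD d] ∧ q.2 ≡ a + b [ZMOD d]} := by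
  have hd : 0 < d := zero_lt_one.trans_le (ha.1.trans ha.2)
  have ha₀ : 0 < a := ha.1
  have hb₀ : 0 < b := hb.1
  ext ⟨v, w⟩
  constructor
  · rintro ⟨⟨m, n⟩, h⟩
    obtain ⟨rfl, rfl⟩ := Prod.mk.inj h
    refine ⟨by positivity, lt_add_of_pos_right _ (by positivity), ?_, ?_⟩
    · exact Int.modEq_iff_dvd.2 ⟨-m, by ring⟩
    · exact Int.modEq_iff_dvd.2 ⟨-(m + n), by ring⟩
  · rintro ⟨hv, hvw, hva, hwb⟩
    obtain ⟨m, hm⟩ := exists_eq_add_mul_natCast hd ha.2 hv hva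
    obtain ⟨n, hn⟩ := exists_eq_add_mul_natCast hd hb.2 (sub_pos.2 hvw)
      (by simpa using hwb.sub hva)
    exact ⟨(m, n), Prod.ext hm.symm (by simp only [sectorPoint]; linarith)⟩

lemma p8R_sectorPoint (m n : ℕ) :
    p8R (sectorPoint a b d (m, n)).1 (sectorPoint a b d (m, n)).2
      = shearedOctic (a + d * m, b + d * n) := by
  unfold p8R sectorPoint shearedOctic
  push_cast
  ring

lemma tsum_sector_eq_toReal_latticeSum (y : ℝ) {i j : ℤ} (ha : a ∈ Icc 1 d) (hb : b ∈ Icc 1 d)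
    (hai : a ≡ i [ZMOD d]) (habj : a + b ≡ j [ZMOD d]) :
    ∑' q : {q : ℤ × ℤ // 0 < q.1 ∧ q.1 < q.2 ∧ y < p8R q.1 q.2 ∧
        q.1 ≡ i [ZMOD d] ∧ q.2 ≡ j [ZMOD d]}, 1 / √(p8R q.1.1 q.1.2)
      = (latticeSum (tailWeight y ∘ shearedOctic) a b d).toReal := by
  have hd : 0 < d := zero_lt_one.trans_le (ha.1.trans ha.2)
  set s : Set (ℤ × ℤ) := {q | 0 < q.1 ∧ q.1 < q.2 ∧ y < p8R q.1 q.2 ∧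
    q.1 ≡ i [ZMOD d] ∧ q.2 ≡ j [ZMOD d]}
  set T : Set (ℤ × ℤ) := {q | y < p8R q.1 q.2}
  set f : ℤ × ℤ → ℝ≥0∞ := fun q => ENNReal.ofReal (√(p8R q.1 q.2))⁻¹
  have hs : s = range (sectorPoint a b d) ∩ T := by
    rw [range_sectorPoint ha hb]
    ext q
    simp only [s, T, mem_inter_iff, mem_ofPred_eq, Int.ModEq, hai.eq, habj.eq]
    tauto
  have hreindex : ∑' q : s, f q = latticeSum (tailWeight y ∘ shearedOctic) a b d := by
    rw [tsum_subtype, hs, ← indicator_indicator, ← tsum_subtype,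
      tsum_range (T.indicator f) (sectorPoint_injective hd), ENNReal.tsum_prod']
    refine tsum_congr fun m => tsum_congr fun n => ?_
    rw [Function.comp_apply, ← p8R_sectorPoint]
    rfl
  rw [← hreindex, ENNReal.tsum_toReal_eq fun _ => ENNReal.ofReal_ne_top]
  refine tsum_congr fun q => ?_
  rw [ENNReal.toReal_ofReal (by positivity), one_div]

end Residues

theorem stmt12_general (α₃ α₄ : ℝ) (g : ℝ → ℝ)
    (hg : ∀ t, g t = (√(t ^ 4 + 48) - 7) ^ (1 / 4 : ℝ))
    (hα₃ : α₃ = ∫ u in 0..1, 1 / √(p8u u))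
    (hα₄ : α₄ = ∫ t in 1..2, ∫ u in g t..1, 1 / √(p8u u))
    {d : ℤ} (hd : 0 < d) (i j : ℤ) {y : ℝ} (hy : 0 < y) :
    |(∑' q : {q : ℤ × ℤ // 0 < q.1 ∧ q.1 < q.2 ∧ y < p8R q.1 q.2 ∧
          q.1 ≡ i [ZMOD d] ∧ q.2 ≡ j [ZMOD d]}, 1 / √(p8R q.1.1 q.1.2))
        - (α₃ + α₄) / (2 * d ^ 2 * y ^ (1 / 4 : ℝ))| ≤ 16 / 3 * y ^ (-3 / 8 : ℝ) := by
  obtain ⟨a, ha, hai⟩ := exists_modEq_mem_Icc_one hd i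
  obtain ⟨b, hb, hbj⟩ := exists_modEq_mem_Icc_one hd (j - a)
  rw [hα₃, hα₄, integral_one_div_sqrt_p8u_add hg,
    tsum_sector_eq_toReal_latticeSum y ha hb hai (by simpa using hbj.add_left a)]
  exact abs_latticeSum_tailWeight_sub_le hy (by exact_mod_cast ha.1) (by exact_mod_cast ha.2)
    (by exact_mod_cast zero_le_one.trans hb.1) (by exact_mod_cast hb.2)

theorem stmt12 (α₃ α₄ : ℝ) (g : ℝ → ℝ)
    (hg : ∀ t, g t = (Real.sqrt (t ^ 4 + 48) - 7) ^ ((1 : ℝ) / 4))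
    (hα₃ : α₃ = ∫ u in (0 : ℝ)..1, 1 / Real.sqrt (p8u u))
    (hα₄ : α₄ = ∫ t in (1 : ℝ)..2, ∫ u in g t..1, 1 / Real.sqrt (p8u u)) :
    ∃ C > 0, ∀ y : ℝ, 1 ≤ y → ∀ i j : ℤ,
      (i = 0 ∨ i = 1) → (j = 0 ∨ j = 1) → ¬(i = 0 ∧ j = 0) →
      |(∑' q : {q : ℤ × ℤ // 0 < q.1 ∧ q.1 < q.2 ∧ y < p8R q.1 q.2 ∧
          q.1 % 2 = i ∧ q.2 % 2 = j}, 1 / Real.sqrt (p8R q.1.1 q.1.2)) -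
        (α₃ + α₄) / (8 * y ^ ((1 : ℝ) / 4))| ≤ C * y ^ (-(3 : ℝ) / 8) := by
  refine ⟨16 / 3, by norm_num, fun y hy i j hi hj _ => ?_⟩
  have h := stmt12_general α₃ α₄ g hg hα₃ hα₄ two_pos i j (zero_lt_one.trans_le hy)
  rw [show (2 * ((2 : ℤ) : ℝ) ^ 2) = 8 by norm_num] at h
  rcases hi with rfl | rfl <;> rcases hj with rfl | rfl <;> exact h
end

section
/- For every real z ≥ 1, the two-dimensional Lebesgue measure of the region ℛ₂(z) = {(x, y) ∈ ℝ² : 0 ≤ x ≤ y and p₈(x,y) ≤ z} equals β·z^{1/4}, where β = (1/2)∫_{π/4}^{π/2} (p₈(1, tan θ))^{−1/4}·(cos θ)^{−2} dθ. -/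
open Real

/-- p₈(x,y) = x⁸ + 14x⁴y⁴ + y⁸ for real x, y. -/
def p8f (x y : ℝ) : ℝ := x ^ 8 + 14 * x ^ 4 * y ^ 4 + y ^ 8

/-!
A positively homogeneous function `f` of degree `d` on the plane is, along each ray where it is
positive, an increasing multiple of `r ^ d`. In polar coordinates the part of `{f ≤ z}` in a cone
is therefore the region under the radius `(z / f (cos θ, sin θ)) ^ (1 / d)`, and half the
integral of the squared radius is its area. Pulling `cos θ` out of `f (cos θ, sin θ)` turns the
integrand into a function of `tan θ` and `cos θ`.
-/

open MeasureTheory Set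

theorem setLIntegral_Ioc_zero_ofReal {R : ℝ} (hR : 0 ≤ R) :
    ∫⁻ r in Ioc 0 R, ENNReal.ofReal r = ENNReal.ofReal (R ^ 2 / 2) := by
  have hint : IntegrableOn (fun r : ℝ => r) (Ioc 0 R) := continuous_id.integrableOn_Ioc
  rw [← ofReal_integral_eq_lintegral_ofReal hint
      ((ae_restrict_mem measurableSet_Ioc).mono fun r hr => hr.1.le),
    ← intervalIntegral.integral_of_le hR, integral_id, zero_pow two_ne_zero, sub_zero]

theorem volume_eq_setLIntegral_polarCoord_symm {S : Set (ℝ × ℝ)} (hS : MeasurableSet S) :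
    volume S = ∫⁻ θ in Ioo (-π) π,
      ∫⁻ r in {r | 0 < r ∧ polarCoord.symm (r, θ) ∈ S}, ENNReal.ofReal r := by
  have hpolar : Measurable polarCoord.symm := continuous_polarCoord_symm.measurable
  rw [← lintegral_indicator_one hS, ← lintegral_comp_polarCoord_symm, polarCoord_target,
    Measure.volume_eq_prod, setLIntegral_prod_symm]
  · refine setLIntegral_congr_fun measurableSet_Ioo fun θ _ => ?_
    have hslice : MeasurableSet {r | polarCoord.symm (r, θ) ∈ S} :=
      (hpolar.comp measurable_prodMk_right) hS
    rw [show {r | 0 < r ∧ polarCoord.symm (r, θ) ∈ S} =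
        {r | polarCoord.symm (r, θ) ∈ S} ∩ Ioi 0 from inter_comm _ _,
      ← setLIntegral_indicator hslice]
    exact lintegral_congr fun r => by simp [indicator]
  · exact ((ENNReal.measurable_ofReal.comp measurable_fst).mul
      ((measurable_one.indicator hS).comp hpolar)).aemeasurable

theorem volume_eq_setLIntegral_sq_radius {S : Set (ℝ × ℝ)} (hS : MeasurableSet S)
    {A : Set ℝ} (hA : MeasurableSet A) (hAπ : A ⊆ Ioo (-π) π)
    {ρ : ℝ → ℝ} (hρ : ∀ θ ∈ A, 0 ≤ ρ θ)
    (hmem : ∀ θ ∈ Ioo (-π) π, ∀ r > 0, polarCoord.symm (r, θ) ∈ S ↔ θ ∈ A ∧ r ≤ ρ θ) :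
    volume S = ∫⁻ θ in A, ENNReal.ofReal (ρ θ ^ 2 / 2) := by
  rw [volume_eq_setLIntegral_polarCoord_symm hS]
  conv_rhs => rw [← inter_eq_left.2 hAπ, ← setLIntegral_indicator hA]
  refine setLIntegral_congr_fun measurableSet_Ioo fun θ hθ => ?_
  by_cases hθA : θ ∈ A
  · have hslice : {r | 0 < r ∧ polarCoord.symm (r, θ) ∈ S} = Ioc 0 (ρ θ) := by
      ext r
      exact and_congr_right fun hr => (hmem θ hθ r hr).trans (and_iff_right hθA)
    rw [hslice, setLIntegral_Ioc_zero_ofReal (hρ θ hθA), indicator_of_mem hθA]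
  · have hslice : {r | 0 < r ∧ polarCoord.symm (r, θ) ∈ S} = ∅ :=
      eq_empty_of_forall_notMem fun r hr => hθA ((hmem θ hθ r hr.1).1 hr.2).1
    rw [hslice, setLIntegral_empty, indicator_of_notMem hθA]

theorem cos_sin_ne_zero (θ : ℝ) : (cos θ, sin θ) ≠ (0 : ℝ × ℝ) := fun h => by
  obtain ⟨hcos, hsin⟩ := Prod.mk.inj h
  simpa [hcos, hsin] using sin_sq_add_cos_sq θ

/-- Positive homogeneity of real degree `d`: scaling the argument by `r > 0` multiplies the value
by `r ^ d`. Nothing is required at `r ≤ 0`, where the real power is not meaningful. -/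
def IsPosHomogeneous {E : Type*} [SMul ℝ E] (d : ℝ) (f : E → ℝ) : Prop :=
  ∀ ⦃r : ℝ⦄, 0 < r → ∀ p, f (r • p) = r ^ d * f p

namespace IsPosHomogeneous

theorem apply_smul_le_iff {E : Type*} [SMul ℝ E] {d : ℝ} {f : E → ℝ}
    (hf : IsPosHomogeneous d f) (hd : 0 < d) {p : E} (hp : 0 < f p) {r : ℝ} (hr : 0 < r)
    {z : ℝ} (hz : 0 ≤ z) : f (r • p) ≤ z ↔ r ≤ (z / f p) ^ d⁻¹ := by
  rw [hf hr, ← le_div_iff₀ hp, le_rpow_inv_iff_of_pos hr.le (by positivity) hd]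

variable {d : ℝ} {f : ℝ × ℝ → ℝ}

theorem apply_cos_sin (hf : IsPosHomogeneous d f) {θ : ℝ} (hθ : 0 < cos θ) :
    f (cos θ, sin θ) = cos θ ^ d * f (1, tan θ) := by
  rw [← hf hθ, Prod.smul_mk, smul_eq_mul, smul_eq_mul, mul_one, mul_comm, tan_mul_cos hθ.ne']

theorem apply_one_tan_rpow_mul_cos_rpow (hf : IsPosHomogeneous d f) (hd : d ≠ 0) {θ : ℝ}
    (hθ : 0 < cos θ) (hpos : 0 ≤ f (1, tan θ)) (s : ℝ) :
    f (1, tan θ) ^ (-(s / d)) * cos θ ^ (-s) = f (cos θ, sin θ) ^ (-(s / d)) := by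
  rw [hf.apply_cos_sin hθ, mul_rpow (by positivity) hpos, ← rpow_mul hθ.le, mul_comm,
    mul_neg, mul_div_cancel₀ s hd]

theorem volume_cone_inter_sublevel (hf : IsPosHomogeneous d f) (hd : 0 < d)
    (hf_meas : Measurable f) {K : Set (ℝ × ℝ)} (hK_meas : MeasurableSet K)
    (hK : ∀ r > (0 : ℝ), ∀ p, r • p ∈ K ↔ p ∈ K) (hpos : ∀ p ∈ K, p ≠ 0 → 0 < f p)
    {z : ℝ} (hz : 0 ≤ z) :
    volume (K ∩ {p | f p ≤ z}) =
      ∫⁻ θ in {θ | θ ∈ Ioo (-π) π ∧ (cos θ, sin θ) ∈ K},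
        ENNReal.ofReal (z ^ (2 / d) / 2 * f (cos θ, sin θ) ^ (-(2 / d))) := by
  have hcircle : ∀ θ, (cos θ, sin θ) ∈ K → 0 < f (cos θ, sin θ) := fun θ hθ =>
    hpos _ hθ (cos_sin_ne_zero θ)
  have hA : MeasurableSet {θ | θ ∈ Ioo (-π) π ∧ (cos θ, sin θ) ∈ K} :=
    measurableSet_Ioo.inter ((measurable_cos.prodMk measurable_sin) hK_meas)
  rw [volume_eq_setLIntegral_sq_radius (ρ := fun θ => (z / f (cos θ, sin θ)) ^ d⁻¹)
    (hK_meas.inter (measurableSet_le hf_meas measurable_const)) hA (fun θ hθ => hθ.1)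
    (fun θ hθ => rpow_nonneg (div_nonneg hz (hcircle θ hθ.2).le) _)]
  · refine setLIntegral_congr_fun hA fun θ hθ => ?_
    have hP := (hcircle θ hθ.2).le
    have hsq : ((z / f (cos θ, sin θ)) ^ d⁻¹) ^ 2 =
        z ^ (2 / d) * f (cos θ, sin θ) ^ (-(2 / d)) := by
      rw [← rpow_mul_natCast (div_nonneg hz hP), Nat.cast_ofNat, inv_mul_eq_div,
        div_rpow hz hP, rpow_neg hP, div_eq_mul_inv]
    rw [hsq, mul_div_right_comm]
  · intro θ hθ r hr
    have hray : polarCoord.symm (r, θ) = r • (cos θ, sin θ) := rfl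
    rw [hray, mem_inter_iff, hK r hr]
    exact (and_congr_right fun hθK => hf.apply_smul_le_iff hd (hcircle θ hθK) hr hz).trans
      (and_congr_left' (and_iff_right hθ).symm)

theorem volume_sector_inter_sublevel (hf : IsPosHomogeneous d f) (hd : 0 < d)
    (hf_cont : Continuous f) {K : Set (ℝ × ℝ)} (hK_meas : MeasurableSet K)
    (hK : ∀ r > (0 : ℝ), ∀ p, r • p ∈ K ↔ p ∈ K) (hpos : ∀ p ∈ K, p ≠ 0 → 0 < f p)
    {a b : ℝ} (hab : a ≤ b) (hsector : {θ | θ ∈ Ioo (-π) π ∧ (cos θ, sin θ) ∈ K} = Icc a b)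
    {z : ℝ} (hz : 0 ≤ z) :
    volume (K ∩ {p | f p ≤ z}) =
      ENNReal.ofReal (z ^ (2 / d) / 2 * ∫ θ in a..b, f (cos θ, sin θ) ^ (-(2 / d))) := by
  have hcircle : ∀ θ ∈ Icc a b, 0 < f (cos θ, sin θ) := fun θ hθ =>
    hpos _ (hsector.ge hθ).2 (cos_sin_ne_zero θ)
  have hcont : ContinuousOn (fun θ => f (cos θ, sin θ) ^ (-(2 / d))) (Icc a b) :=
    (hf_cont.comp (continuous_cos.prodMk continuous_sin)).continuousOn.rpow_const
      fun θ hθ => Or.inl (hcircle θ hθ).ne'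
  rw [hf.volume_cone_inter_sublevel hd hf_cont.measurable hK_meas hK hpos hz, hsector,
    ← ofReal_integral_eq_lintegral_ofReal (hcont.const_mul _).integrableOn_Icc,
    integral_const_mul, integral_Icc_eq_integral_Ioc, intervalIntegral.integral_of_le hab]
  filter_upwards [ae_restrict_mem measurableSet_Icc] with θ hθ
  exact mul_nonneg (by positivity) (rpow_nonneg (hcircle θ hθ).le _)

end IsPosHomogeneous

theorem cos_le_sin_iff_pi_div_four_le {θ : ℝ} (hθ : θ ∈ Icc 0 (π / 2)) :
    cos θ ≤ sin θ ↔ π / 4 ≤ θ := by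
  rw [← sin_pi_div_two_sub, strictMonoOn_sin.le_iff_le
    ⟨by linarith [hθ.2, pi_pos], by linarith [hθ.1]⟩ ⟨by linarith [hθ.1, pi_pos], hθ.2⟩]
  constructor <;> intro h <;> linarith

theorem ofPred_nonneg_cos_le_sin :
    {θ | θ ∈ Ioo (-π) π ∧ 0 ≤ cos θ ∧ cos θ ≤ sin θ} = Icc (π / 4) (π / 2) := by
  ext θ
  constructor
  · rintro ⟨⟨hπθ, hθπ⟩, hcos, hcs⟩
    have hθ0 : 0 ≤ θ := by
      by_contra! h
      exact (sin_neg_of_neg_of_neg_pi_lt h hπθ).not_ge (hcos.trans hcs)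
    have hθ2 : θ ≤ π / 2 := by
      by_contra! h
      exact (cos_neg_of_pi_div_two_lt_of_lt h (by linarith)).not_ge hcos
    exact ⟨(cos_le_sin_iff_pi_div_four_le ⟨hθ0, hθ2⟩).1 hcs, hθ2⟩
  · rintro ⟨h4, h2⟩
    have hπ := pi_pos
    exact ⟨⟨by linarith, by linarith⟩, cos_nonneg_of_neg_pi_div_two_le_of_le (by linarith) h2,
      (cos_le_sin_iff_pi_div_four_le ⟨by linarith, h2⟩).2 h4⟩

theorem isPosHomogeneous_p8f : IsPosHomogeneous 8 (Function.uncurry p8f) := by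
  rintro r - ⟨x, y⟩
  simp only [Prod.smul_mk, smul_eq_mul, Function.uncurry_apply_pair, p8f, rpow_ofNat]
  ring

theorem p8f_pos {p : ℝ × ℝ} (hp : p ≠ 0) : 0 < Function.uncurry p8f p := by
  obtain ⟨x, y⟩ := p
  unfold Function.uncurry p8f
  rcases eq_or_ne x 0 with rfl | hx
  · have hy : y ≠ 0 := fun h => hp (by rw [h]; rfl)
    positivity
  · positivity

theorem continuous_p8f : Continuous (Function.uncurry p8f) := by
  unfold Function.uncurry p8f
  fun_prop

theorem integral_p8f_one_tan :
    ∫ θ in (π / 4)..(π / 2), p8f 1 (tan θ) ^ (-(1 : ℝ) / 4) * cos θ ^ (-(2 : ℝ)) =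
      ∫ θ in (π / 4)..(π / 2), p8f (cos θ) (sin θ) ^ (-(2 / 8 : ℝ)) := by
  refine intervalIntegral.integral_congr_Ioo_of_le (by linarith [pi_pos]) fun θ hθ => ?_
  have hcos : 0 < cos θ := cos_pos_of_mem_Ioo ⟨by linarith [hθ.1, pi_pos], hθ.2⟩
  have hpos : 0 < Function.uncurry p8f (1, tan θ) := p8f_pos (by simp)
  rw [show -(1 : ℝ) / 4 = -(2 / 8) by norm_num]
  exact isPosHomogeneous_p8f.apply_one_tan_rpow_mul_cos_rpow (by norm_num) hcos hpos.le 2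

theorem stmt14_general (β : ℝ)
    (hβ : β = (1 / 2) * ∫ θ in (π / 4)..(π / 2),
      (p8f 1 (Real.tan θ)) ^ (-(1 : ℝ) / 4) * (Real.cos θ) ^ (-(2 : ℝ)))
    (z : ℝ) (hz : 0 ≤ z) :
    MeasureTheory.volume {p : ℝ × ℝ | 0 ≤ p.1 ∧ p.1 ≤ p.2 ∧ p8f p.1 p.2 ≤ z} =
      ENNReal.ofReal (β * z ^ ((1 : ℝ) / 4)) := by
  let K : Set (ℝ × ℝ) := {p | 0 ≤ p.1 ∧ p.1 ≤ p.2}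
  have hK_meas : MeasurableSet K :=
    (measurableSet_le measurable_const measurable_fst).inter
      (measurableSet_le measurable_fst measurable_snd)
  have hK : ∀ r > (0 : ℝ), ∀ p, r • p ∈ K ↔ p ∈ K := fun r hr p =>
    and_congr (mul_nonneg_iff_of_pos_left hr) (mul_le_mul_iff_right₀ hr)
  have harea := isPosHomogeneous_p8f.volume_sector_inter_sublevel (by norm_num)
    continuous_p8f hK_meas hK (fun p _ hp => p8f_pos hp) (by linarith [pi_pos])
    ofPred_nonneg_cos_le_sin hz
  calc volume {p : ℝ × ℝ | 0 ≤ p.1 ∧ p.1 ≤ p.2 ∧ p8f p.1 p.2 ≤ z}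
      = volume (K ∩ {p | Function.uncurry p8f p ≤ z}) := by
        congr 1; ext p; exact and_assoc.symm
    _ = ENNReal.ofReal (z ^ (2 / 8 : ℝ) / 2 *
          ∫ θ in (π / 4)..(π / 2), p8f (cos θ) (sin θ) ^ (-(2 / 8 : ℝ))) := harea
    _ = ENNReal.ofReal (β * z ^ ((1 : ℝ) / 4)) := by
        rw [hβ, integral_p8f_one_tan, show (2 / 8 : ℝ) = 1 / 4 by norm_num]
        ring_nf

theorem stmt14 (β : ℝ)
    (hβ : β = (1 / 2) * ∫ θ in (π / 4)..(π / 2),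
      (p8f 1 (Real.tan θ)) ^ (-(1 : ℝ) / 4) * (Real.cos θ) ^ (-(2 : ℝ)))
    (z : ℝ) (hz : 1 ≤ z) :
    MeasureTheory.volume {p : ℝ × ℝ | 0 ≤ p.1 ∧ p.1 ≤ p.2 ∧ p8f p.1 p.2 ≤ z} =
      ENNReal.ofReal (β * z ^ ((1 : ℝ) / 4)) :=
  stmt14_general β hβ z (zero_le_one.trans hz)
end

section
/- Let ℛ₂(z) = {(x, y) ∈ ℝ² : 0 ≤ x ≤ y, p₈(x,y) ≤ z} and fix (i, j) ∈ {0,1}² with (i, j) ≠ (0, 0). Let L(z) be the number of integer pairs (v, w) ∈ ℛ₂(z) with v ≡ i (mod 2) and w ≡ j (mod 2), and let L′(z) be the number of those with additionally gcd(v, w) = 1. There is a constant C > 0 such that for all real z ≥ 2: |L(z) − (β/4)z^{1/4}| ≤ C·z^{1/8} and |L′(z) − (β/(3ζ(2)))z^{1/4}| ≤ C·z^{1/8}·log z. -/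
open Real

/-- The number of integer points (v,w) in ℛ₂(z) with v ≡ i (mod 2) and w ≡ j (mod 2). -/
noncomputable def L (i j : ℤ) (z : ℝ) : ℕ :=
  Set.ncard {q : ℤ × ℤ | 0 ≤ q.1 ∧ q.1 ≤ q.2 ∧ p8f q.1 q.2 ≤ z ∧
    q.1 % 2 = i ∧ q.2 % 2 = j}

/-- The number of those points with additionally gcd(v,w) = 1. -/
noncomputable def L' (i j : ℤ) (z : ℝ) : ℕ :=
  Set.ncard {q : ℤ × ℤ | 0 ≤ q.1 ∧ q.1 ≤ q.2 ∧ p8f q.1 q.2 ≤ z ∧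
    q.1 % 2 = i ∧ q.2 % 2 = j ∧ Int.gcd q.1 q.2 = 1}

/-!
Since `p₈` has nonnegative coefficients, the shear `(x, y) ↦ (x, y - x)` maps `ℛ₂(z)` onto a lower
set `D` of the positive quadrant, contained in `[0, R]²` with `R = z ^ (1 / 8)`. Attach to each
point of a translate of `ℤ²` lying in `D` the unit square above and to the right of it: up to the
strip of width one along the axes, these squares cover `D` and lie in the translate of `D` by
`(1, 1)`. So the number of such points is the area of `D` up to `O(R + 1)`. A residue class modulo
`2` is, after halving, a translate of `ℤ²`, and the area of `ℛ₂(z)` is `β R ^ 2` by polar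
coordinates; this gives `L`.

As `(i, j) ≠ (0, 0)`, the points counted by `L` have odd gcd, and dividing by an odd `d` preserves
the residue class, so Möbius inversion gives `L'(R ^ 8) = ∑ μ(d) L((R / d) ^ 8)` over odd `d ≤ R`.
The main terms add up to `β / 4 * R ^ 2 * ∑ μ(d) / d ^ 2`, where the full sum over odd `d` is
`((1 - 2⁻²) ζ(2))⁻¹ = 4 / (3 ζ(2))`, and the errors `O(R / d)` to `O(R log R)`.
-/

open MeasureTheory Set

section LatticeCount

/-- The point of the translated lattice `a + ℤ²` with index `n`. -/
def latticePoint (a : ℝ × ℝ) (n : ℤ × ℤ) : ℝ × ℝ := (a.1 + n.1, a.2 + n.2)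

/-- The half-open unit square with lower left corner `p`; half-open so that the squares at the
points of a translated lattice tile the plane. -/
def unitSquare (p : ℝ × ℝ) : Set (ℝ × ℝ) := Ico p.1 (p.1 + 1) ×ˢ Ico p.2 (p.2 + 1)

/-- The part of the square `[0, R]²` at distance at most `1` from the coordinate axes; it absorbs
the boundary effects in the lattice point count. -/
def axisStrip (R : ℝ) : Set (ℝ × ℝ) := Icc 0 (1, R) ∪ Icc 0 (R, 1)

lemma pairwise_disjoint_unitSquare (a : ℝ × ℝ) :
    Pairwise (Function.onFun Disjoint fun n ↦ unitSquare (latticePoint a n)) := by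
  intro m n hmn
  rw [Function.onFun, unitSquare, unitSquare, disjoint_prod]
  by_cases h : m.1 = n.1
  · exact .inr (pairwise_disjoint_Ico_add_intCast a.2 fun h' ↦ hmn (Prod.ext h h'))
  · exact .inl (pairwise_disjoint_Ico_add_intCast a.1 h)

lemma volume_unitSquare (p : ℝ × ℝ) : volume (unitSquare p) = 1 := by
  simp [unitSquare, Measure.volume_eq_prod]

lemma volume_biUnion_unitSquare (a : ℝ × ℝ) {S : Set (ℤ × ℤ)} (hS : S.Finite) :
    volume (⋃ n ∈ S, unitSquare (latticePoint a n)) = S.ncard := by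
  lift S to Finset (ℤ × ℤ) using hS
  simp only [Finset.mem_coe]
  rw [measure_biUnion_finset (fun _ _ _ _ hmn ↦ pairwise_disjoint_unitSquare a hmn)
    (fun _ _ ↦ measurableSet_Ico.prod measurableSet_Ico)]
  simp [volume_unitSquare]

lemma volume_real_axisStrip_le {R : ℝ} (hR : 0 ≤ R) : volume.real (axisStrip R) ≤ 2 * R := by
  have volume_box (x y : ℝ) (hx : 0 ≤ x) (hy : 0 ≤ y) :
      volume.real (Icc (0 : ℝ × ℝ) (x, y)) = x * y := by
    simp [← Icc_prod_Icc, Prod.zero_eq_mk, measureReal_def, Measure.volume_eq_prod, hx, hy]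
  refine (measureReal_union_le _ _).trans_eq ?_
  rw [volume_box 1 R zero_le_one hR, volume_box R 1 hR zero_le_one]
  ring

lemma finite_preimage_latticePoint (a : ℝ × ℝ) {D : Set (ℝ × ℝ)} {R : ℝ}
    (hDR : D ⊆ Icc 0 (R, R)) : (latticePoint a ⁻¹' D).Finite := by
  refine (finite_Icc (⌈-a.1⌉, ⌈-a.2⌉) (⌊R - a.1⌋, ⌊R - a.2⌋)).subset fun n hn ↦ ?_
  obtain ⟨⟨h₁, h₂⟩, h₃, h₄⟩ := hDR hn
  simp only [latticePoint, Prod.fst_zero, Prod.snd_zero] at h₁ h₂ h₃ h₄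
  simp only [mem_Icc, Prod.le_def, Int.ceil_le, Int.le_floor]
  exact ⟨⟨by linarith, by linarith⟩, by linarith, by linarith⟩

variable {D : Set (ℝ × ℝ)} {R : ℝ}

lemma subset_biUnion_unitSquare_union_axisStrip (a : ℝ × ℝ) (hDR : D ⊆ Icc 0 (R, R))
    (hD : ∀ ⦃p q⦄, p ∈ D → 0 ≤ q → q ≤ p → q ∈ D) :
    D ⊆ (⋃ n ∈ latticePoint a ⁻¹' D, unitSquare (latticePoint a n)) ∪ axisStrip (R + 1) := by
  rintro ⟨x, y⟩ hxy
  obtain ⟨⟨hx, hy⟩, hxR, hyR⟩ := hDR hxy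
  dsimp only [Prod.fst_zero, Prod.snd_zero] at hx hy hxR hyR
  rcases lt_or_ge x 1 with hx1 | hx1
  · exact .inr (.inl ⟨⟨hx, hy⟩, hx1.le, by dsimp; linarith⟩)
  rcases lt_or_ge y 1 with hy1 | hy1
  · exact .inr (.inr ⟨⟨hx, hy⟩, by dsimp; linarith, hy1.le⟩)
  have := Int.floor_le (x - a.1)
  have := Int.lt_floor_add_one (x - a.1)
  have := Int.floor_le (y - a.2)
  have := Int.lt_floor_add_one (y - a.2)
  refine .inl (mem_biUnion (x := (⌊x - a.1⌋, ⌊y - a.2⌋)) (hD hxy ⟨?_, ?_⟩ ⟨?_, ?_⟩)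
    ⟨⟨?_, ?_⟩, ?_, ?_⟩) <;> dsimp [latticePoint] <;> linarith

lemma biUnion_unitSquare_subset (a : ℝ × ℝ) (hDR : D ⊆ Icc 0 (R, R))
    (hD : ∀ ⦃p q⦄, p ∈ D → 0 ≤ q → q ≤ p → q ∈ D) :
    ⋃ n ∈ latticePoint a ⁻¹' D, unitSquare (latticePoint a n) ⊆
      (· + (-1, -1)) ⁻¹' D ∪ axisStrip (R + 1) := by
  simp only [iUnion_subset_iff]
  rintro n hn ⟨x, y⟩ ⟨⟨hxl, hxu⟩, hyl, hyu⟩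
  obtain ⟨⟨hpx, hpy⟩, hpxR, hpyR⟩ := hDR hn
  dsimp only [Prod.fst_zero, Prod.snd_zero] at *
  rcases lt_or_ge x 1 with hx1 | hx1
  · exact .inr (.inl ⟨⟨by dsimp; linarith, by dsimp; linarith⟩, hx1.le, by dsimp; linarith⟩)
  rcases lt_or_ge y 1 with hy1 | hy1
  · exact .inr (.inr ⟨⟨by dsimp; linarith, by dsimp; linarith⟩, by dsimp; linarith, hy1.le⟩)
  · refine .inl (hD hn ⟨?_, ?_⟩ ⟨?_, ?_⟩) <;> dsimp <;> linarith

theorem abs_ncard_latticePoint_sub_volume_le (a : ℝ × ℝ) (hR : 0 ≤ R) (hDR : D ⊆ Icc 0 (R, R))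
    (hD : ∀ ⦃p q⦄, p ∈ D → 0 ≤ q → q ≤ p → q ∈ D) :
    |((latticePoint a ⁻¹' D).ncard : ℝ) - volume.real D| ≤ 2 * (R + 1) := by
  set U := ⋃ n ∈ latticePoint a ⁻¹' D, unitSquare (latticePoint a n)
  have volume_U : volume U = (latticePoint a ⁻¹' D).ncard :=
    volume_biUnion_unitSquare a (finite_preimage_latticePoint a hDR)
  have volume_strip := volume_real_axisStrip_le (R := R + 1) (by linarith)
  have volume_shift : volume ((· + ((-1, -1) : ℝ × ℝ)) ⁻¹' D) = volume D :=
    measure_preimage_add_right _ _ _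
  have D_ne_top : volume D ≠ ⊤ := measure_ne_top_of_subset hDR measure_Icc_lt_top.ne
  have strip_ne_top : volume (axisStrip (R + 1)) ≠ ⊤ :=
    measure_union_ne_top measure_Icc_lt_top.ne measure_Icc_lt_top.ne
  have D_le : volume.real D ≤ volume.real U + volume.real (axisStrip (R + 1)) :=
    (measureReal_mono (subset_biUnion_unitSquare_union_axisStrip a hDR hD)
      (measure_union_ne_top (volume_U ▸ ENNReal.natCast_ne_top _) strip_ne_top)).trans
      (measureReal_union_le _ _)
  have U_le : volume.real U ≤ volume.real D + volume.real (axisStrip (R + 1)) := by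
    rw [measureReal_def (s := D), ← volume_shift]
    exact (measureReal_mono (biUnion_unitSquare_subset a hDR hD)
      (measure_union_ne_top (volume_shift ▸ D_ne_top) strip_ne_top)).trans
      (measureReal_union_le _ _)
  have real_U : volume.real U = (latticePoint a ⁻¹' D).ncard := by
    rw [measureReal_def, volume_U, ENNReal.toReal_natCast]
  rw [← real_U, abs_le]
  constructor <;> linarith

end LatticeCount

section PolarArea

lemma lintegral_Ioc_zero_ofReal {ρ : ℝ} (hρ : 0 ≤ ρ) :
    ∫⁻ r in Ioc 0 ρ, ENNReal.ofReal r = ENNReal.ofReal (ρ ^ 2 / 2) := by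
  have hint : IntegrableOn (fun r : ℝ ↦ r) (Ioc 0 ρ) :=
    continuous_id.integrableOn_Icc.mono_set Ioc_subset_Icc_self
  have hnonneg : ∀ᵐ r ∂volume.restrict (Ioc 0 ρ), 0 ≤ r :=
    ae_restrict_of_forall_mem measurableSet_Ioc fun r hr ↦ hr.1.le
  rw [← ofReal_integral_eq_lintegral_ofReal hint hnonneg, ← intervalIntegral.integral_of_le hρ,
    integral_id, zero_pow two_ne_zero, sub_zero]

variable {D : Set (ℝ × ℝ)} {ρ : ℝ → ℝ}

lemma volume_eq_lintegral_of_mem_iff_polar (hD : MeasurableSet D) {s : Set ℝ}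
    (hs : MeasurableSet s) (hsπ : s ⊆ Ioo (-π) π) (hρ : ∀ θ ∈ s, 0 ≤ ρ θ)
    (hmem : ∀ r > 0, ∀ θ ∈ Ioo (-π) π, (r * cos θ, r * sin θ) ∈ D ↔ θ ∈ s ∧ r ≤ ρ θ) :
    volume D = ∫⁻ θ in s, ENNReal.ofReal (ρ θ ^ 2 / 2) := by
  set f : ℝ × ℝ → ENNReal := fun p ↦
    ENNReal.ofReal p.1 * D.indicator 1 (p.1 * cos p.2, p.1 * sin p.2) with hf
  have hf_meas : Measurable f :=
    (by fun_prop : Measurable fun p : ℝ × ℝ ↦ ENNReal.ofReal p.1).mul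
      ((measurable_one.indicator hD).comp (by fun_prop))
  have radial_integral : ∀ θ ∈ Ioo (-π) π,
      ∫⁻ r in Ioi 0, f (r, θ) = s.indicator (fun θ ↦ ENNReal.ofReal (ρ θ ^ 2 / 2)) θ := by
    intro θ hθ
    by_cases hθs : θ ∈ s
    · rw [indicator_of_mem hθs, ← lintegral_Ioc_zero_ofReal (hρ θ hθs),
        ← Ioi_inter_Iic, inter_comm, ← setLIntegral_indicator measurableSet_Iic]
      refine setLIntegral_congr_fun measurableSet_Ioi fun r hr ↦ ?_
      by_cases hrρ : r ≤ ρ θ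
      · simp [hf, hrρ, (hmem r hr θ hθ).2 ⟨hθs, hrρ⟩]
      · simp [hf, hrρ, mt (hmem r hr θ hθ).1 fun h ↦ hrρ h.2]
    · rw [indicator_of_notMem hθs]
      refine setLIntegral_eq_zero measurableSet_Ioi fun r hr ↦ ?_
      simp [hf, mt (hmem r hr θ hθ).1 fun h ↦ hθs h.1]
  calc volume D = ∫⁻ p in Ioi 0 ×ˢ Ioo (-π) π, f p := by
        rw [← lintegral_indicator_one hD, ← lintegral_comp_polarCoord_symm]
        rfl
    _ = ∫⁻ θ in Ioo (-π) π, ∫⁻ r in Ioi 0, f (r, θ) := by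
        rw [Measure.volume_eq_prod, ← Measure.prod_restrict, lintegral_prod_symm' _ hf_meas]
    _ = ∫⁻ θ in s, ENNReal.ofReal (ρ θ ^ 2 / 2) := by
        rw [setLIntegral_congr_fun measurableSet_Ioo radial_integral, setLIntegral_indicator hs,
          inter_eq_left.2 hsπ]

theorem volume_real_eq_integral_of_mem_iff_polar (hD : MeasurableSet D) {α β : ℝ} (hα : -π < α)
    (hαβ : α ≤ β) (hβ : β < π) (hρ : ∀ θ ∈ Icc α β, 0 ≤ ρ θ) (hρc : ContinuousOn ρ (Icc α β))
    (hmem : ∀ r > 0, ∀ θ ∈ Ioo (-π) π,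
      (r * cos θ, r * sin θ) ∈ D ↔ θ ∈ Icc α β ∧ r ≤ ρ θ) :
    volume.real D = (1 / 2) * ∫ θ in α..β, ρ θ ^ 2 := by
  have hint : IntegrableOn (fun θ ↦ ρ θ ^ 2 / 2) (Icc α β) :=
    ((hρc.pow 2).div_const 2).integrableOn_Icc
  rw [measureReal_def, volume_eq_lintegral_of_mem_iff_polar hD measurableSet_Icc
      (Icc_subset_Ioo hα hβ) hρ hmem,
    ← ofReal_integral_eq_lintegral_ofReal hint (ae_of_all _ fun θ ↦ by positivity),
    ENNReal.toReal_ofReal (integral_nonneg fun θ ↦ by positivity), integral_Icc_eq_integral_Ioc,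
    ← intervalIntegral.integral_of_le hαβ, intervalIntegral.integral_div, one_div_mul_eq_div]

end PolarArea

section SectorRegion

/-- The region `ℛ₂(z)`: the part of the sublevel set `p₈ ≤ z` in the octant `0 ≤ x ≤ y`. -/
def sectorRegion (z : ℝ) : Set (ℝ × ℝ) := {p | 0 ≤ p.1 ∧ p.1 ≤ p.2 ∧ p8f p.1 p.2 ≤ z}

lemma p8f_mul_mul (c x y : ℝ) : p8f (c * x) (c * y) = c ^ 8 * p8f x y := by
  unfold p8f
  ring

lemma p8f_le_p8f {x y x' y' : ℝ} (hx : 0 ≤ x) (hy : 0 ≤ y) (hxx' : x ≤ x') (hyy' : y ≤ y') :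
    p8f x y ≤ p8f x' y' := by
  unfold p8f
  have := hx.trans hxx'
  gcongr

lemma continuous_p8f_s15 : Continuous fun p : ℝ × ℝ ↦ p8f p.1 p.2 := by
  unfold p8f
  fun_prop

lemma p8f_cos_sin_pos (θ : ℝ) : 0 < p8f (cos θ) (sin θ) := by
  unfold p8f
  rcases eq_or_ne (cos θ) 0 with h | h
  · have : sin θ ≠ 0 := fun h' ↦ by simpa [h, h'] using sin_sq_add_cos_sq θ
    positivity
  · positivity

lemma snd_le_of_mem_sectorRegion {R : ℝ} (hR : 0 ≤ R) {p : ℝ × ℝ}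
    (hp : p ∈ sectorRegion (R ^ 8)) : p.2 ≤ R := by
  obtain ⟨-, -, hpR⟩ := hp
  refine le_of_pow_le_pow_left₀ (n := 8) (by norm_num) hR (le_trans ?_ hpR)
  have : 0 ≤ p.1 ^ 8 + 14 * p.1 ^ 4 * p.2 ^ 4 := by positivity
  unfold p8f
  linarith

lemma mul_mul_mem_sectorRegion_iff {c : ℝ} (hc : 0 < c) {x y R : ℝ} :
    (c * x, c * y) ∈ sectorRegion (R ^ 8) ↔ (x, y) ∈ sectorRegion ((R / c) ^ 8) := by
  simp only [sectorRegion, mem_ofPred_eq, p8f_mul_mul, mul_nonneg_iff_of_pos_left hc,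
    mul_le_mul_iff_right₀ hc, div_pow, le_div_iff₀' (pow_pos hc 8)]

lemma cos_nonneg_and_cos_le_sin_iff {θ : ℝ} (hθ : θ ∈ Ioo (-π) π) :
    0 ≤ cos θ ∧ cos θ ≤ sin θ ↔ θ ∈ Icc (π / 4) (π / 2) := by
  constructor
  · rintro ⟨hcos, hcs⟩
    have hθ0 : 0 ≤ θ := by
      by_contra! h
      exact (sin_neg_of_neg_of_neg_pi_lt h hθ.1).not_ge (hcos.trans hcs)
    have hθ2 : θ ≤ π / 2 := by
      by_contra! h
      exact (cos_neg_of_pi_div_two_lt_of_lt h (by linarith [hθ.2])).not_ge hcos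
    rw [← cos_pi_div_two_sub, strictAntiOn_cos.le_iff_ge ⟨hθ0, hθ.2.le⟩
      ⟨by linarith, by linarith⟩] at hcs
    exact ⟨by linarith, hθ2⟩
  · rintro ⟨h4, h2⟩
    refine ⟨cos_nonneg_of_mem_Icc ⟨by linarith [pi_pos], h2⟩, ?_⟩
    rw [← cos_pi_div_two_sub]
    exact cos_le_cos_of_nonneg_of_le_pi (by linarith) (by linarith [pi_pos]) (by linarith)

lemma polar_mem_sectorRegion_iff {R r θ : ℝ} (hR : 0 ≤ R) (hr : 0 < r) (hθ : θ ∈ Ioo (-π) π) :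
    (r * cos θ, r * sin θ) ∈ sectorRegion (R ^ 8) ↔
      θ ∈ Icc (π / 4) (π / 2) ∧ r ≤ R * p8f (cos θ) (sin θ) ^ (-(1 : ℝ) / 8) := by
  have hp := p8f_cos_sin_pos θ
  have hpow : (R * p8f (cos θ) (sin θ) ^ (-(1 : ℝ) / 8)) ^ 8 =
      R ^ 8 / p8f (cos θ) (sin θ) := by
    rw [mul_pow, ← rpow_mul_natCast hp.le, show -(1 : ℝ) / 8 * (8 : ℕ) = -1 by norm_num,
      rpow_neg_one, div_eq_mul_inv]
  have hradius : r ^ 8 * p8f (cos θ) (sin θ) ≤ R ^ 8 ↔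
      r ≤ R * p8f (cos θ) (sin θ) ^ (-(1 : ℝ) / 8) := by
    rw [← pow_le_pow_iff_left₀ hr.le (by positivity) (n := 8) (by norm_num), hpow, le_div_iff₀ hp]
  rw [← cos_nonneg_and_cos_le_sin_iff hθ, ← hradius]
  simp only [sectorRegion, mem_ofPred_eq, p8f_mul_mul, mul_nonneg_iff_of_pos_left hr,
    mul_le_mul_iff_right₀ hr, and_assoc]

lemma measurableSet_sectorRegion (z : ℝ) : MeasurableSet (sectorRegion z) :=
  (measurableSet_le measurable_const measurable_fst).inter <|
    (measurableSet_le measurable_fst measurable_snd).inter <|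
      measurableSet_le continuous_p8f_s15.measurable measurable_const

lemma p8f_one_tan_rpow_mul_cos_rpow {θ : ℝ} (hθ : 0 < cos θ) :
    p8f 1 (tan θ) ^ (-(1 : ℝ) / 4) * cos θ ^ (-(2 : ℝ)) =
      p8f (cos θ) (sin θ) ^ (-(1 : ℝ) / 4) := by
  have hscale : p8f (cos θ) (sin θ) = cos θ ^ 8 * p8f 1 (tan θ) := by
    rw [← p8f_mul_mul, mul_one, tan_eq_sin_div_cos, mul_div_cancel₀ _ hθ.ne']
  have hp : 0 ≤ p8f 1 (tan θ) := by
    unfold p8f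
    positivity
  rw [hscale, mul_rpow (by positivity) hp, ← rpow_natCast_mul hθ.le, mul_comm]
  norm_num

theorem volume_real_sectorRegion {R : ℝ} (hR : 0 ≤ R) :
    volume.real (sectorRegion (R ^ 8)) = (1 / 2 * ∫ θ in (π / 4)..(π / 2),
      p8f 1 (tan θ) ^ (-(1 : ℝ) / 4) * cos θ ^ (-(2 : ℝ))) * R ^ 2 := by
  have hπ := pi_pos
  have hradius_sq (θ : ℝ) : (R * p8f (cos θ) (sin θ) ^ (-(1 : ℝ) / 8)) ^ 2 =
      p8f (cos θ) (sin θ) ^ (-(1 : ℝ) / 4) * R ^ 2 := by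
    rw [mul_pow, ← rpow_mul_natCast (p8f_cos_sin_pos θ).le, mul_comm]
    norm_num
  have hintegrand :
      ∫ θ in (π / 4)..(π / 2), p8f 1 (tan θ) ^ (-(1 : ℝ) / 4) * cos θ ^ (-(2 : ℝ)) =
        ∫ θ in (π / 4)..(π / 2), p8f (cos θ) (sin θ) ^ (-(1 : ℝ) / 4) :=
    intervalIntegral.integral_congr_Ioo_of_le (by linarith) fun θ hθ ↦
      p8f_one_tan_rpow_mul_cos_rpow (cos_pos_of_mem_Ioo ⟨by linarith [hθ.1], hθ.2⟩)
  have hp_cont : Continuous fun θ ↦ p8f (cos θ) (sin θ) :=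
    continuous_p8f_s15.comp₂ continuous_cos continuous_sin
  have hradius_cont : Continuous fun θ ↦ R * p8f (cos θ) (sin θ) ^ (-(1 : ℝ) / 8) :=
    continuous_const.mul (hp_cont.rpow_const fun θ ↦ .inl (p8f_cos_sin_pos θ).ne')
  rw [volume_real_eq_integral_of_mem_iff_polar (measurableSet_sectorRegion _)
    (by linarith) (by linarith) (by linarith)
    (fun θ _ ↦ mul_nonneg hR (rpow_nonneg (p8f_cos_sin_pos θ).le _)) hradius_cont.continuousOn
    fun r hr θ hθ ↦ polar_mem_sectorRegion_iff hR hr hθ]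
  simp only [hradius_sq, intervalIntegral.integral_mul_const, hintegrand, mul_assoc]

lemma volume_real_sectorRegion_one :
    volume.real (sectorRegion 1) = 1 / 2 * ∫ θ in (π / 4)..(π / 2),
      p8f 1 (tan θ) ^ (-(1 : ℝ) / 4) * cos θ ^ (-(2 : ℝ)) := by
  simpa only [one_pow, mul_one] using volume_real_sectorRegion zero_le_one

end SectorRegion

section ParityClasses

/-- The image of `ℛ₂(R⁸)` under the area-preserving shear `(x, y) ↦ (x, y - x)`, which turns it into
a lower set of the positive quadrant. -/
def shearedRegion (R : ℝ) : Set (ℝ × ℝ) := (fun p ↦ (p.1, p.1 + p.2)) ⁻¹' sectorRegion (R ^ 8)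

/-- The integer points of `ℛ₂(z)` in the residue class of `(i, j)` modulo `2`. -/
def parityPoints (i j : ℤ) (z : ℝ) : Set (ℤ × ℤ) :=
  {q | ((q.1 : ℝ), (q.2 : ℝ)) ∈ sectorRegion z ∧ q.1 % 2 = i ∧ q.2 % 2 = j}

lemma shearedRegion_subset_Icc {R : ℝ} (hR : 0 ≤ R) : shearedRegion R ⊆ Icc 0 (R, R) := by
  intro p hp
  have hyR : p.1 + p.2 ≤ R := snd_le_of_mem_sectorRegion hR hp
  obtain ⟨hx, hxy, -⟩ := hp
  dsimp only at hx hxy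
  exact ⟨⟨hx, by dsimp; linarith⟩, by dsimp; linarith, by dsimp; linarith⟩

lemma mem_shearedRegion_of_le {R : ℝ} ⦃p q : ℝ × ℝ⦄ (hp : p ∈ shearedRegion R) (hq : 0 ≤ q)
    (hqp : q ≤ p) : q ∈ shearedRegion R := by
  obtain ⟨hx, hy⟩ : 0 ≤ q.1 ∧ 0 ≤ q.2 := hq
  exact ⟨hx, le_add_of_nonneg_right hy,
    (p8f_le_p8f hx (add_nonneg hx hy) hqp.1 (add_le_add hqp.1 hqp.2)).trans hp.2.2⟩

lemma volume_real_shearedRegion (R : ℝ) :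
    volume.real (shearedRegion R) = volume.real (sectorRegion (R ^ 8)) :=
  congrArg ENNReal.toReal <| (measurePreserving_prod_add volume volume).measure_preimage
    (measurableSet_sectorRegion _).nullMeasurableSet

lemma L_eq_ncard_parityPoints (i j : ℤ) (z : ℝ) : L i j z = (parityPoints i j z).ncard := by
  simp only [L, parityPoints, sectorRegion, mem_ofPred_eq, Int.cast_nonneg_iff, Int.cast_le,
    and_assoc]

-- Writing `(v, w) = (i, j) + 2 (n₁, n₁ + n₂)` undoes the shear and the halving at once.
lemma L_eq_ncard_latticePoint {i j : ℤ} (hi : i = 0 ∨ i = 1) (hj : j = 0 ∨ j = 1) (R : ℝ) :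
    L i j (R ^ 8) =
      (latticePoint ((i : ℝ) / 2, ((j : ℝ) - i) / 2) ⁻¹' shearedRegion (R / 2)).ncard := by
  set a : ℝ × ℝ := ((i : ℝ) / 2, ((j : ℝ) - i) / 2)
  set φ : ℤ × ℤ → ℤ × ℤ := fun n ↦ (i + 2 * n.1, j + 2 * (n.1 + n.2)) with hφ
  have hφ_inj : Function.Injective φ := by
    intro m n hmn
    simp only [hφ, Prod.mk.injEq] at hmn
    exact Prod.ext (by lia) (by lia)
  have mem_iff (n : ℤ × ℤ) :
      φ n ∈ parityPoints i j (R ^ 8) ↔ n ∈ latticePoint a ⁻¹' shearedRegion (R / 2) := by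
    have hmod : (φ n).1 % 2 = i ∧ (φ n).2 % 2 = j := by lia
    have hcoord : (((φ n).1 : ℝ), ((φ n).2 : ℝ)) =
        (2 * (latticePoint a n).1, 2 * ((latticePoint a n).1 + (latticePoint a n).2)) := by
      simp only [hφ, latticePoint, a, Prod.mk.injEq]
      push_cast
      constructor <;> linarith
    rw [parityPoints, mem_ofPred_eq, and_iff_left hmod, hcoord,
      mul_mul_mem_sectorRegion_iff two_pos]
    rfl
  have subset_range : parityPoints i j (R ^ 8) ⊆ range φ := by
    rintro ⟨v, w⟩ ⟨-, hv, hw⟩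
    exact ⟨(v / 2, w / 2 - v / 2), Prod.ext (by lia) (by lia)⟩
  rw [L_eq_ncard_parityPoints, ← image_preimage_eq_of_subset subset_range,
    ncard_image_of_injective _ hφ_inj]
  exact congrArg ncard (ext mem_iff)

theorem abs_L_sub_le {i j : ℤ} (hi : i = 0 ∨ i = 1) (hj : j = 0 ∨ j = 1) {R : ℝ} (hR : 1 ≤ R) :
    |(L i j (R ^ 8) : ℝ) - volume.real (sectorRegion 1) / 4 * R ^ 2| ≤ 3 * R := by
  have hR2 : 0 ≤ R / 2 := by linarith
  have hvol : volume.real (shearedRegion (R / 2)) = volume.real (sectorRegion 1) / 4 * R ^ 2 := by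
    rw [volume_real_shearedRegion, volume_real_sectorRegion hR2, volume_real_sectorRegion_one]
    ring
  have := abs_ncard_latticePoint_sub_volume_le ((i : ℝ) / 2, ((j : ℝ) - i) / 2) hR2
    (shearedRegion_subset_Icc hR2) mem_shearedRegion_of_le
  rw [L_eq_ncard_latticePoint hi hj, ← hvol]
  linarith

end ParityClasses

section MoebiusInversion

open scoped ArithmeticFunction.Moebius

lemma sum_moebius_dvd_eq {n m : ℕ} (hm : m ∈ Finset.Icc 1 n) :
    ∑ d ∈ Finset.Icc 1 n with d ∣ m, μ d = if m = 1 then 1 else 0 := by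
  obtain ⟨hm1, hmn⟩ := Finset.mem_Icc.1 hm
  have hdiv : {d ∈ Finset.Icc 1 n | d ∣ m} = m.divisors := by
    ext d
    simp only [Finset.mem_filter, Finset.mem_Icc, Nat.mem_divisors]
    exact ⟨fun h ↦ ⟨h.2, by lia⟩, fun h ↦
      ⟨⟨Nat.pos_of_dvd_of_pos h.1 hm1, (Nat.le_of_dvd hm1 h.1).trans hmn⟩, h.1⟩⟩
  rw [hdiv, ← ArithmeticFunction.coe_mul_zeta_apply, ArithmeticFunction.moebius_mul_coe_zeta,
    ArithmeticFunction.one_apply]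

lemma ncard_sep_eq_one_eq_sum_moebius {ι : Type*} {S : Set ι} (hS : S.Finite) {g : ι → ℕ} {n : ℕ}
    (hg : ∀ q ∈ S, g q ∈ Finset.Icc 1 n) :
    ({q ∈ S | g q = 1}.ncard : ℤ) = ∑ d ∈ Finset.Icc 1 n, μ d * {q ∈ S | d ∣ g q}.ncard := by
  lift S to Finset ι using hS
  simp only [Finset.mem_coe, ← Finset.coe_filter, ncard_coe_finset] at hg ⊢
  calc ((S.filter fun q ↦ g q = 1).card : ℤ)
      = ∑ q ∈ S, ∑ d ∈ Finset.Icc 1 n with d ∣ g q, μ d := by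
        rw [Finset.card_filter, Nat.cast_sum]
        exact Finset.sum_congr rfl fun q hq ↦ by simp [sum_moebius_dvd_eq (hg q hq)]
    _ = ∑ d ∈ Finset.Icc 1 n, ∑ q ∈ S with d ∣ g q, μ d := by
        simp only [Finset.sum_filter]
        exact Finset.sum_comm
    _ = ∑ d ∈ Finset.Icc 1 n, μ d * ((S.filter fun q ↦ d ∣ g q).card : ℕ) := by
        simp only [Finset.sum_const, nsmul_eq_mul, mul_comm]

lemma LSeriesHasSum_trivChar_mul_moebius (m : ℕ) [NeZero m] {s : ℂ} (hs : 1 < s.re) :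
    LSeriesHasSum (fun n : ℕ ↦ (1 : DirichletCharacter ℂ m) n * (μ n : ℂ)) s
      ((∏ p ∈ m.primeFactors, (1 - (p : ℂ) ^ (-s))) * riemannZeta s)⁻¹ := by
  have hs1 : s ≠ 1 := by
    rintro rfl
    simp at hs
  have hinv := DirichletCharacter.LSeries.mul_mu_eq_one (1 : DirichletCharacter ℂ m) hs
  rw [← DirichletCharacter.LFunction_eq_LSeries _ hs, ← DirichletCharacter.LFunctionTrivChar,
    DirichletCharacter.LFunctionTrivChar_eq_mul_riemannZeta hs1] at hinv
  rw [← eq_inv_of_mul_eq_one_right hinv]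
  exact (DirichletCharacter.LSeriesSummable_mul _
    (ArithmeticFunction.LSeriesSummable_moebius_iff.2 hs)).LSeriesHasSum

/-- The Möbius function twisted by the principal character modulo `2`; it inverts divisor sums over
odd numbers. -/
noncomputable def oddMoebius (d : ℕ) : ℝ := if Odd d then (μ d : ℝ) else 0

lemma abs_oddMoebius_le_one (d : ℕ) : |oddMoebius d| ≤ 1 := by
  unfold oddMoebius
  split_ifs
  · exact_mod_cast ArithmeticFunction.abs_moebius_le_one
  · simp

lemma trivChar_two_mul_moebius (n : ℕ) :
    (1 : DirichletCharacter ℂ 2) n * (μ n : ℂ) = (oddMoebius n : ℂ) := by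
  have hunit : IsUnit (n : ZMod 2) ↔ Odd n := by
    rw [ZMod.isUnit_iff_coprime, Nat.coprime_two_right]
  by_cases hn : Odd n
  · simp [oddMoebius, hn, MulChar.one_apply (hunit.2 hn)]
  · simp [oddMoebius, hn, MulChar.map_nonunit _ (mt hunit.1 hn)]

lemma hasSum_oddMoebius_div_sq {z2 : ℝ} (hz2 : (z2 : ℂ) = riemannZeta 2) :
    HasSum (fun d : ℕ ↦ oddMoebius d / d ^ 2) (4 / (3 * z2)) := by
  have heuler : ((∏ p ∈ Nat.primeFactors 2, (1 - (p : ℂ) ^ (-2 : ℂ))) * riemannZeta 2)⁻¹ =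
      ((4 / (3 * z2) : ℝ) : ℂ) := by
    have h2 : (1 : ℂ) - ((2 : ℕ) : ℂ) ^ (-2 : ℂ) = 3 / 4 := by
      rw [Complex.cpow_neg]
      norm_num
    rw [Nat.prime_two.primeFactors, Finset.prod_singleton, h2, ← hz2]
    push_cast
    field_simp
  have hsum := LSeriesHasSum_trivChar_mul_moebius 2 (s := 2) (by norm_num)
  rw [LSeriesHasSum, heuler] at hsum
  refine Complex.hasSum_ofReal.1 (hsum.congr_fun fun d ↦ ?_)
  rcases eq_or_ne d 0 with rfl | hd
  · simp
  · rw [LSeries.term_of_ne_zero hd, trivChar_two_mul_moebius]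
    norm_cast

end MoebiusInversion

section DivisorSums

variable {a : ℕ → ℝ} {σ : ℝ}

lemma abs_sum_div_sq_sub_le (ha : ∀ d, |a d| ≤ 1) (hσ : HasSum (fun d : ℕ ↦ a d / d ^ 2) σ)
    (n : ℕ) : |∑ d ∈ Finset.Icc 1 n, a d / d ^ 2 - σ| ≤ 2 / (n + 1) := by
  have hrange : ∑ d ∈ Finset.Icc 1 n, a d / d ^ 2 = ∑ d ∈ Finset.range (n + 1), a d / d ^ 2 := by
    rw [Finset.range_eq_Ico, Finset.sum_eq_sum_Ico_succ_bot n.succ_pos, Nat.cast_zero,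
      zero_pow two_ne_zero, div_zero, zero_add]
    rfl
  have hterm (d : ℕ) : |a d / d ^ 2| ≤ ((d : ℝ) ^ 2)⁻¹ := by
    rw [abs_div, abs_of_nonneg (by positivity : (0 : ℝ) ≤ d ^ 2), div_eq_mul_inv]
    exact mul_le_of_le_one_left (by positivity) (ha d)
  rw [hrange, abs_sub_comm]
  refine le_of_tendsto (hσ.tendsto_sum_nat.sub_const _).abs ?_
  filter_upwards [Filter.eventually_ge_atTop (n + 1)] with m hm
  calc |∑ d ∈ Finset.range m, a d / d ^ 2 - ∑ d ∈ Finset.range (n + 1), a d / d ^ 2|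
      = |∑ d ∈ Finset.Ioo n m, a d / d ^ 2| := by
        rw [← Finset.sum_Ico_eq_sub _ hm]
        rfl
    _ ≤ ∑ d ∈ Finset.Ioo n m, ((d : ℝ) ^ 2)⁻¹ :=
        (Finset.abs_sum_le_sum_abs _ _).trans (Finset.sum_le_sum fun d _ ↦ hterm d)
    _ ≤ 2 / (n + 1) := sum_Ioo_inv_sq_le n m

lemma sum_inv_floor_le {N : ℝ} (hN : 1 ≤ N) :
    ∑ d ∈ Finset.Icc 1 ⌊N⌋₊, (d : ℝ)⁻¹ ≤ 1 + log N := by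
  simpa [harmonic_eq_sum_Icc] using harmonic_floor_le_one_add_log N hN

theorem abs_sum_mul_sub_le {A : ℝ → ℝ} {c K : ℝ} (ha : ∀ d, |a d| ≤ 1)
    (hσ : HasSum (fun d : ℕ ↦ a d / d ^ 2) σ) (hA : ∀ x, 1 ≤ x → |A x - c * x ^ 2| ≤ K * x)
    {N : ℝ} (hN : 1 ≤ N) :
    |∑ d ∈ Finset.Icc 1 ⌊N⌋₊, a d * A (N / d) - c * σ * N ^ 2| ≤
      K * N * (1 + log N) + 2 * |c| * N := by
  have hN0 : 0 < N := by linarith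
  have hK : 0 ≤ K := by simpa using (abs_nonneg _).trans (hA 1 le_rfl)
  have hterm : ∀ d ∈ Finset.Icc 1 ⌊N⌋₊,
      |a d * (A (N / d) - c * (N / d) ^ 2)| ≤ K * N * (d : ℝ)⁻¹ := by
    intro d hd
    obtain ⟨hd1, hdN⟩ := Finset.mem_Icc.1 hd
    have hd0 : (0 : ℝ) < d := Nat.cast_pos.2 hd1
    have hdN' : 1 ≤ N / d := (one_le_div hd0).2 ((Nat.le_floor_iff hN0.le).1 hdN)
    rw [abs_mul, mul_assoc, ← div_eq_mul_inv]
    exact (mul_le_of_le_one_left (abs_nonneg _) (ha d)).trans (hA _ hdN')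
  have herror : |∑ d ∈ Finset.Icc 1 ⌊N⌋₊, a d * (A (N / d) - c * (N / d) ^ 2)| ≤
      K * N * (1 + log N) := by
    refine (Finset.abs_sum_le_sum_abs _ _).trans ((Finset.sum_le_sum hterm).trans ?_)
    rw [← Finset.mul_sum]
    gcongr
    exact sum_inv_floor_le hN
  have htail : |c * N ^ 2 * (∑ d ∈ Finset.Icc 1 ⌊N⌋₊, a d / d ^ 2 - σ)| ≤ 2 * |c| * N := by
    calc |c * N ^ 2 * (∑ d ∈ Finset.Icc 1 ⌊N⌋₊, a d / d ^ 2 - σ)|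
        ≤ |c| * N ^ 2 * (2 / N) := by
          rw [abs_mul, abs_mul, abs_of_pos (pow_pos hN0 2)]
          gcongr
          refine (abs_sum_div_sq_sub_le ha hσ _).trans ?_
          gcongr
          exact (Nat.lt_floor_add_one N).le
      _ = 2 * |c| * N := by field_simp
  have hsplit : ∑ d ∈ Finset.Icc 1 ⌊N⌋₊, a d * A (N / d) - c * σ * N ^ 2 =
      ∑ d ∈ Finset.Icc 1 ⌊N⌋₊, a d * (A (N / d) - c * (N / d) ^ 2) +
        c * N ^ 2 * (∑ d ∈ Finset.Icc 1 ⌊N⌋₊, a d / d ^ 2 - σ) := by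
    rw [mul_sub, Finset.mul_sum, add_sub, ← Finset.sum_add_distrib]
    congr 1
    · exact Finset.sum_congr rfl fun d _ ↦ by ring
    · ring
  rw [hsplit]
  exact (abs_add_le _ _).trans (add_le_add herror htail)

end DivisorSums

section PrimitivePoints

variable {i j : ℤ} {R : ℝ}

lemma finite_parityPoints (i j : ℤ) (hR : 0 ≤ R) : (parityPoints i j (R ^ 8)).Finite := by
  refine (finite_Icc (0 : ℤ × ℤ) (⌊R⌋, ⌊R⌋)).subset ?_
  rintro ⟨v, w⟩ ⟨hq, -, -⟩
  have hwR : w ≤ ⌊R⌋ := Int.le_floor.2 (snd_le_of_mem_sectorRegion hR hq)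
  have hv : 0 ≤ v := Int.cast_nonneg_iff.1 hq.1
  have hvw : v ≤ w := Int.cast_le.1 hq.2.1
  exact ⟨⟨hv, hv.trans hvw⟩, hvw.trans hwR, hwR⟩

lemma odd_gcd_of_mem_parityPoints (hij : ¬(i = 0 ∧ j = 0)) {z : ℝ} {q : ℤ × ℤ}
    (hq : q ∈ parityPoints i j z) : Odd (Int.gcd q.1 q.2) := by
  obtain ⟨-, hi, hj⟩ := hq
  by_contra hodd
  have h2 : (2 : ℤ) ∣ Int.gcd q.1 q.2 := by
    exact_mod_cast (Nat.not_odd_iff_even.1 hodd).two_dvd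
  have hv := h2.trans (Int.gcd_dvd_left ..)
  have hw := h2.trans (Int.gcd_dvd_right ..)
  lia

lemma gcd_mem_Icc_of_mem_parityPoints (hij : ¬(i = 0 ∧ j = 0)) (hR : 0 ≤ R) {q : ℤ × ℤ}
    (hq : q ∈ parityPoints i j (R ^ 8)) : Int.gcd q.1 q.2 ∈ Finset.Icc 1 ⌊R⌋₊ := by
  have hgcd_pos := (odd_gcd_of_mem_parityPoints hij hq).pos
  have hv : 0 ≤ q.1 := Int.cast_nonneg_iff.1 hq.1.1
  have hvw : q.1 ≤ q.2 := Int.cast_le.1 hq.1.2.1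
  have hw : 0 < q.2 := by
    by_contra! hw
    rw [show q.1 = 0 by lia, show q.2 = 0 by lia, Int.gcd_self] at hgcd_pos
    exact hgcd_pos.ne' rfl
  have hgcd_le : ((Int.gcd q.1 q.2 : ℕ) : ℝ) ≤ q.2 := by
    exact_mod_cast Int.le_of_dvd hw (Int.gcd_dvd_right ..)
  exact Finset.mem_Icc.2
    ⟨hgcd_pos, Nat.le_floor (hgcd_le.trans (snd_le_of_mem_sectorRegion hR hq.1))⟩

lemma mul_mul_mem_parityPoints_iff {d : ℕ} (hd : Odd d) {q : ℤ × ℤ} :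
    ((d * q.1, d * q.2) : ℤ × ℤ) ∈ parityPoints i j (R ^ 8) ↔
      q ∈ parityPoints i j ((R / d) ^ 8) := by
  have hmod (x : ℤ) : (d * x) % 2 = x % 2 := by
    rw [Int.mul_emod, show (d : ℤ) % 2 = 1 by exact_mod_cast Nat.odd_iff.1 hd, one_mul,
      Int.emod_emod]
  simp only [parityPoints, mem_ofPred_eq, hmod, Int.cast_mul, Int.cast_natCast,
    mul_mul_mem_sectorRegion_iff (Nat.cast_pos.2 hd.pos)]

lemma ncard_dvd_gcd_eq_L (i j : ℤ) (R : ℝ) {d : ℕ} (hd : Odd d) :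
    {q ∈ parityPoints i j (R ^ 8) | d ∣ Int.gcd q.1 q.2}.ncard = L i j ((R / d) ^ 8) := by
  have hinj : Function.Injective fun q : ℤ × ℤ ↦ ((d * q.1, d * q.2) : ℤ × ℤ) := by
    have hd0 : (d : ℤ) ≠ 0 := by exact_mod_cast hd.pos.ne'
    exact (mul_right_injective₀ hd0).prodMap (mul_right_injective₀ hd0)
  rw [L_eq_ncard_parityPoints, ← ncard_image_of_injective (parityPoints i j _) hinj]
  refine congrArg ncard (ext fun ⟨v, w⟩ ↦ ⟨?_, ?_⟩)
  · rintro ⟨hq, hdvd⟩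
    have hdvd' : (d : ℤ) ∣ Int.gcd v w := Int.natCast_dvd_natCast.2 hdvd
    obtain ⟨a, rfl⟩ := hdvd'.trans (Int.gcd_dvd_left ..)
    obtain ⟨b, rfl⟩ := hdvd'.trans (Int.gcd_dvd_right ..)
    exact ⟨(a, b), (mul_mul_mem_parityPoints_iff hd).1 hq, rfl⟩
  · rintro ⟨q, hq, hqvw⟩
    obtain ⟨rfl, rfl⟩ := Prod.mk.inj hqvw
    exact ⟨(mul_mul_mem_parityPoints_iff hd).2 hq, by simp [Int.gcd_mul_left]⟩

lemma L'_eq_ncard_parityPoints (i j : ℤ) (z : ℝ) :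
    L' i j z = {q ∈ parityPoints i j z | Int.gcd q.1 q.2 = 1}.ncard := by
  simp only [L', parityPoints, sectorRegion, mem_ofPred_eq, Int.cast_nonneg_iff, Int.cast_le,
    and_assoc]

theorem L'_eq_sum_oddMoebius_mul_L (hij : ¬(i = 0 ∧ j = 0)) (hR : 0 ≤ R) :
    (L' i j (R ^ 8) : ℝ) = ∑ d ∈ Finset.Icc 1 ⌊R⌋₊, oddMoebius d * L i j ((R / d) ^ 8) := by
  rw [L'_eq_ncard_parityPoints, ← Int.cast_natCast (R := ℝ), ncard_sep_eq_one_eq_sum_moebius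
    (finite_parityPoints i j hR) fun q hq ↦ gcd_mem_Icc_of_mem_parityPoints hij hR hq]
  push_cast
  refine Finset.sum_congr rfl fun d _ ↦ ?_
  by_cases hd : Odd d
  · rw [ncard_dvd_gcd_eq_L i j R hd, oddMoebius, if_pos hd]
  · have hempty : {q ∈ parityPoints i j (R ^ 8) | d ∣ Int.gcd q.1 q.2} = ∅ := by
      rw [sep_eq_empty_iff_mem_false]
      exact fun q hq hdvd ↦ hd ((odd_gcd_of_mem_parityPoints hij hq).of_dvd_nat hdvd)
    simp [oddMoebius, hd, hempty]

end PrimitivePoints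

theorem stmt15 (z2 : ℝ) (hz2 : (z2 : ℂ) = riemannZeta 2) (β : ℝ)
    (hβ : β = (1 / 2) * ∫ θ in (π / 4)..(π / 2),
      (p8f 1 (Real.tan θ)) ^ (-(1 : ℝ) / 4) * (Real.cos θ) ^ (-(2 : ℝ)))
    (i j : ℤ) (hi : i = 0 ∨ i = 1) (hj : j = 0 ∨ j = 1) (hij : ¬(i = 0 ∧ j = 0)) :
    ∃ C > 0, ∀ z : ℝ, 2 ≤ z →
      |(L i j z : ℝ) - (β / 4) * z ^ ((1 : ℝ) / 4)| ≤ C * z ^ ((1 : ℝ) / 8) ∧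
      |(L' i j z : ℝ) - (β / (3 * z2)) * z ^ ((1 : ℝ) / 4)| ≤
        C * z ^ ((1 : ℝ) / 8) * Real.log z := by
  rw [← volume_real_sectorRegion_one] at hβ
  have hL (R : ℝ) (hR : 1 ≤ R) : |(L i j (R ^ 8) : ℝ) - β / 4 * R ^ 2| ≤ 3 * R :=
    hβ ▸ abs_L_sub_le hi hj hR
  refine ⟨10 + |β|, by positivity, fun z hz ↦ ?_⟩
  obtain ⟨R, hR, rfl⟩ : ∃ R : ℝ, 1 ≤ R ∧ R ^ 8 = z := ⟨z ^ ((1 : ℝ) / 8),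
    one_le_rpow (by linarith) (by norm_num), by rw [← rpow_mul_natCast (by linarith)]; norm_num⟩
  have hR0 : 0 ≤ R := by linarith
  have hR4 : (R ^ 8) ^ ((1 : ℝ) / 4) = R ^ 2 := by rw [← rpow_natCast_mul hR0]; norm_num
  have hR8 : (R ^ 8) ^ ((1 : ℝ) / 8) = R := by rw [← rpow_natCast_mul hR0]; norm_num
  have hlog : 1 / 2 ≤ log (R ^ 8) := by linarith [log_two_gt_d9, log_le_log two_pos hz]
  have hL' := abs_sum_mul_sub_le abs_oddMoebius_le_one (hasSum_oddMoebius_div_sq hz2) hL hR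
  rw [← L'_eq_sum_oddMoebius_mul_L hij hR0, show β / 4 * (4 / (3 * z2)) = β / (3 * z2) by ring]
    at hL'
  rw [hR4, hR8]
  refine ⟨(hL R hR).trans (by nlinarith [abs_nonneg β]), hL'.trans ?_⟩
  rw [log_pow, Nat.cast_ofNat] at hlog
  rw [abs_div, Nat.abs_ofNat, log_pow, Nat.cast_ofNat]
  have hRlog : R ≤ 16 * (R * log R) := by nlinarith
  linarith [mul_le_mul_of_nonneg_left hRlog (abs_nonneg β)]
end

section
/- Let M(t) = Σ_{n ≤ t} μ(n) and M₃(x) = Σ_{n ≤ x, 3 ∣ n} μ(n), where μ is the Möbius function. Then for every real x ≥ 0, M₃(x) = −Σ_{j ≥ 1} M(x/3^j) (the sum on the right has only finitely many nonzero terms, since M(t) = 0 for t < 1). -/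
open ArithmeticFunction

/-- M(t) = Σ_{n ≤ t} μ(n), the Mertens function. -/
noncomputable def M (t : ℝ) : ℤ :=
  ∑ n ∈ Finset.Icc 1 ⌊t⌋₊, moebius n

/-- M₃(x) = Σ_{n ≤ x, 3 ∣ n} μ(n). -/
noncomputable def M₃ (x : ℝ) : ℤ :=
  ∑ n ∈ (Finset.Icc 1 ⌊x⌋₊).filter (fun n => 3 ∣ n), moebius n

/-!
For a prime `p`, let `M_p x` be the sum of `μ n` over the multiples `n ≤ x` of `p`. Writing such an
`n` as `p * m`, we have `μ (p * m) = -μ m` if `p ∤ m` and `μ (p * m) = 0` otherwise, so that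
`M (x / p) = M_p (x / p) - M_p x`. Hence the series `∑ M (x / p ^ (j + 1))` telescopes, and its sum
is `-M_p x` because `M_p (x / p ^ k) = 0` for large `k`.
-/

open Filter Finset

/-- The part of the Mertens sum supported on the multiples of `d`, namely `Σ_{n ≤ x, d ∣ n} μ(n)`;
it replaces the `3` of `M₃` by an arbitrary `d`, with `M₃ = mertensMultiples 3` definitionally. -/
noncomputable def mertensMultiples (d : ℕ) (x : ℝ) : ℤ :=
  ∑ n ∈ Icc 1 ⌊x⌋₊ with d ∣ n, moebius n

theorem hasSum_succ_sub_of_eventually_eq_zero {G : Type*} [AddCommGroup G] [TopologicalSpace G]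
    {f : ℕ → G} (hf : ∀ᶠ n in atTop, f n = 0) :
    HasSum (fun n ↦ f (n + 1) - f n) (-f 0) := by
  obtain ⟨k, hk⟩ := eventually_atTop.mp hf
  have partial_sum : ∑ n ∈ range k, (f (n + 1) - f n) = -f 0 := by
    rw [sum_range_sub, hk k le_rfl, zero_sub]
  rw [← partial_sum]
  refine hasSum_sum_of_ne_finset_zero fun n hn ↦ ?_
  have hkn : k ≤ n := by simpa using hn
  rw [hk n hkn, hk (n + 1) (by lia), sub_zero]

theorem sum_Icc_filter_dvd {A : Type*} [AddCommMonoid A] {d : ℕ} (hd : 0 < d) (N : ℕ)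
    (f : ℕ → A) :
    ∑ n ∈ Icc 1 N with d ∣ n, f n = ∑ m ∈ Icc 1 (N / d), f (d * m) := by
  have filter_eq_image : {n ∈ Icc 1 N | d ∣ n} = (Icc 1 (N / d)).image (d * ·) := by
    ext n
    simp only [mem_filter, mem_Icc, mem_image, Nat.le_div_iff_mul_le hd]
    constructor
    · rintro ⟨⟨hpos, hle⟩, m, rfl⟩
      exact ⟨m, ⟨Nat.pos_of_mul_pos_left hpos, by rwa [mul_comm]⟩, rfl⟩
    · rintro ⟨m, ⟨hpos, hle⟩, rfl⟩
      exact ⟨⟨Nat.mul_pos hd hpos, by rwa [mul_comm]⟩, dvd_mul_right d m⟩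
  rw [filter_eq_image, sum_image (mul_right_injective₀ hd.ne').injOn]

theorem mertensMultiples_eq_zero_of_lt_one (d : ℕ) {x : ℝ} (hx : x < 1) :
    mertensMultiples d x = 0 := by
  simp [mertensMultiples, Nat.floor_eq_zero.mpr hx]

theorem eventually_mertensMultiples_div_pow_eq_zero (d : ℕ) {b : ℝ} (hb : 1 < b) (x : ℝ) :
    ∀ᶠ k : ℕ in atTop, mertensMultiples d (x / b ^ k) = 0 := by
  have tendsto_zero : Tendsto (fun k : ℕ ↦ x / b ^ k) atTop (nhds 0) :=
    tendsto_const_nhds.div_atTop (tendsto_pow_atTop_atTop_of_one_lt hb)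
  filter_upwards [tendsto_zero.eventually_lt_const one_pos] with k hk
  exact mertensMultiples_eq_zero_of_lt_one d hk

theorem moebius_prime_mul {p : ℕ} (hp : p.Prime) (m : ℕ) :
    moebius (p * m) = if p ∣ m then 0 else -moebius m := by
  split_ifs with hpm
  · refine moebius_eq_zero_of_not_squarefree fun hsq ↦ ?_
    exact hp.not_isUnit (hsq p (mul_dvd_mul_left p hpm))
  · have hcop : p.Coprime m := hp.coprime_iff_not_dvd.mpr hpm
    rw [isMultiplicative_moebius.map_mul_of_coprime hcop, moebius_apply_prime hp, neg_one_mul]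

theorem mertens_div_prime {p : ℕ} (hp : p.Prime) (x : ℝ) :
    M (x / p) = mertensMultiples p (x / p) - mertensMultiples p x := by
  have sum_multiples : mertensMultiples p x = ∑ m ∈ Icc 1 ⌊x / p⌋₊, moebius (p * m) := by
    rw [mertensMultiples, sum_Icc_filter_dvd hp.pos, Nat.floor_div_natCast]
  rw [sum_multiples, mertensMultiples, M, sum_filter, ← sum_sub_distrib]
  refine sum_congr rfl fun m _ ↦ ?_
  rw [moebius_prime_mul hp]
  split_ifs <;> ring

theorem stmt17_general {p : ℕ} (hp : p.Prime) (x : ℝ) :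
    HasSum (fun j : ℕ ↦ M (x / p ^ (j + 1))) (-mertensMultiples p x) := by
  have telescoping (j : ℕ) : M (x / p ^ (j + 1)) =
      mertensMultiples p (x / p ^ (j + 1)) - mertensMultiples p (x / p ^ j) := by
    rw [pow_succ, ← div_div, mertens_div_prime hp]
  have one_lt : (1 : ℝ) < p := mod_cast hp.one_lt
  simpa only [telescoping, pow_zero, div_one] using
    hasSum_succ_sub_of_eventually_eq_zero
      (eventually_mertensMultiples_div_pow_eq_zero p one_lt x)

theorem stmt17 (x : ℝ) (hx : 0 ≤ x) :
    M₃ x = -∑' j : ℕ, M (x / 3 ^ (j + 1)) := by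
  have tsum_eq := (stmt17_general Nat.prime_three x).tsum_eq
  exact neg_eq_iff_eq_neg.mp (mod_cast tsum_eq.symm)
end
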